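/- arXiv:2110.15908 — 4 statements merged into one kernel-verified Lean document; each statement's English description precedes it below -/
import Mathlib

section
/- Let X be a smooth extremal surface of degree q+1 in ℙ³(k) and let L be any line on X. Then L contains exactly q²+1 star points of X; equivalently, there are exactly q²+1 stars on X containing L. -/
open Module

/-! Basic setup: `k` is an algebraically closed field of characteristic `p > 0`,
`q = p^e`.  We model ℙ³(k) via linear subspaces of `k⁴ = Fin 4 → k`:
points, lines and planes of ℙ³(k) are subspaces of dimension 1, 2 and 3
respectively.  A hypersurface cut out by a homogeneous form is recorded by its
affine cone in `k⁴`. -/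

/-- The Frobenius form in 4 variables determined by a 4×4 matrix `A`:
`∑ i j, A i j * x i ^ q * x j`, a homogeneous form of degree `q+1`. -/
def frobForm {k : Type*} [Field k] (q : ℕ) (A : Matrix (Fin 4) (Fin 4) k)
    (x : Fin 4 → k) : k :=
  ∑ i, ∑ j, A i j * x i ^ q * x j

/-- The affine cone in `k⁴` of the extremal surface in ℙ³(k) cut out by the
Frobenius form with matrix `A`; a point of ℙ³(k) lies on the surface iff its
homogeneous coordinate representatives lie in this set. -/
def extremalCone (k : Type*) [Field k] (q : ℕ) (A : Matrix (Fin 4) (Fin 4) k) :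
    Set (Fin 4 → k) :=
  {x | frobForm q A x = 0}

/-- A point of ℙ³(k): a 1-dimensional subspace of `k⁴`. -/
def IsPoint {k : Type*} [Field k] (c : Submodule k (Fin 4 → k)) : Prop :=
  finrank k c = 1

/-- A line of ℙ³(k): a 2-dimensional subspace of `k⁴`. -/
def IsLine {k : Type*} [Field k] (L : Submodule k (Fin 4 → k)) : Prop :=
  finrank k L = 2

/-- A plane of ℙ³(k): a 3-dimensional subspace of `k⁴`. -/
def IsPlane {k : Type*} [Field k] (H : Submodule k (Fin 4 → k)) : Prop :=
  finrank k H = 3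

/-- `L` is a line lying on the surface with affine cone `X`. -/
def IsLineOn {k : Type*} [Field k] (X : Set (Fin 4 → k))
    (L : Submodule k (Fin 4 → k)) : Prop :=
  IsLine L ∧ (L : Set (Fin 4 → k)) ⊆ X

/-- Two lines of ℙ³(k) meet iff the corresponding subspaces of `k⁴` intersect
nontrivially. -/
def MeetsLine {k : Type*} [Field k] (L M : Submodule k (Fin 4 → k)) : Prop :=
  L ⊓ M ≠ ⊥

/-- Two lines of ℙ³(k) are skew iff the corresponding subspaces of `k⁴`
intersect trivially. -/
def SkewLine {k : Type*} [Field k] (L M : Submodule k (Fin 4 → k)) : Prop :=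
  L ⊓ M = ⊥

/-- `IsStarAt q X S c`: `S` is a star on the surface with affine cone `X`,
centered at the point `c`, i.e. a set of `q+1` distinct lines on the surface
all passing through `c`. -/
def IsStarAt {k : Type*} [Field k] (q : ℕ) (X : Set (Fin 4 → k))
    (S : Set (Submodule k (Fin 4 → k))) (c : Submodule k (Fin 4 → k)) : Prop :=
  IsPoint c ∧ S.ncard = q + 1 ∧ ∀ L ∈ S, IsLineOn X L ∧ c ≤ L

/-- `S` is a star on the surface with affine cone `X`. -/
def IsStar {k : Type*} [Field k] (q : ℕ) (X : Set (Fin 4 → k))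
    (S : Set (Submodule k (Fin 4 → k))) : Prop :=
  ∃ c, IsStarAt q X S c

/-- `c` is a star point of the surface with affine cone `X`. -/
def IsStarPoint {k : Type*} [Field k] (q : ℕ) (X : Set (Fin 4 → k))
    (c : Submodule k (Fin 4 → k)) : Prop :=
  ∃ S, IsStarAt q X S c

/-- `H` is a star plane of the surface with affine cone `X`, centered at `c`:
the plane section `X ∩ H` is the union of a star centered at `c`. -/
def IsStarPlaneAt {k : Type*} [Field k] (q : ℕ) (X : Set (Fin 4 → k))
    (H c : Submodule k (Fin 4 → k)) : Prop :=
  IsPlane H ∧ ∃ S, IsStarAt q X S c ∧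
    X ∩ (H : Set (Fin 4 → k)) = ⋃ L ∈ S, (L : Set (Fin 4 → k))

/-- An element of `Aut(X)`: since every projective linear automorphism of
ℙ³(k) is represented by an invertible linear map of `k⁴` (uniquely up to
scalars, which act trivially on subspaces and preserve every cone), `g ∈
PGL(4,k)` with `g(X) = X` corresponds to a linear automorphism of `k⁴`
mapping the affine cone `X` onto itself. -/
def PreservesCone {k : Type*} [Field k] (X : Set (Fin 4 → k))
    (g : (Fin 4 → k) ≃ₗ[k] (Fin 4 → k)) : Prop :=
  (⇑g) '' X = X


def sC {k : Type*} [Field k] (o : Option k) : k := o.elim 1 id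
def tC {k : Type*} [Field k] (o : Option k) : k := o.elim 0 (fun _ => 1)

open Polynomial in
theorem roots_count {k : Type*} [Field k] [IsAlgClosed k] (p m Q : ℕ) (hp : p.Prime)
    (hchar : CharP k p) (hm : 1 ≤ m) (hQ : Q = p ^ m) (a b c d : k) (h : a * d - b * c ≠ 0) :
    {o : Option k | a * sC o ^ Q * sC o + b * sC o ^ Q * tC o + c * tC o ^ Q * sC o
      + d * tC o ^ Q * tC o = 0}.ncard = Q + 1 := by
  classical
  have hQ0 : (Q : k) = 0 := by
    rw [CharP.cast_eq_zero_iff k p, hQ]; exact dvd_pow_self p (by omega)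
  have hQ2 : 2 ≤ Q := by
    rw [hQ]; exact hp.two_le.trans (Nat.le_self_pow (by omega) p)
  set f : k[X] := C a * X ^ (Q+1) + C b * X ^ Q + C c * X + C d with hf
  have hder : derivative f = C a * X ^ Q + C c := by
    simp [hf, derivative_X_pow, hQ0]
  have hsep : f.Separable := by
    rw [Polynomial.separable_def']
    refine ⟨C ((a * d - b * c)⁻¹) * C a, C ((a * d - b * c)⁻¹) * (- C a * X - C b), ?_⟩
    have : C ((a * d - b * c)⁻¹) * (C a * C d - C b * C c) = 1 := by
      rw [← C_mul, ← C_mul, ← C_sub, ← C_mul, inv_mul_cancel₀ h, C_1]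
    rw [hder, hf, ← this]; ring
  have hf0 : f ≠ 0 := hsep.ne_zero
  have hcard : f.roots.toFinset.card = f.natDegree := by
    rw [Multiset.toFinset_card_of_nodup (nodup_roots hsep)]
    exact (IsAlgClosed.splits f).natDegree_eq_card_roots.symm
  have hev : ∀ s : k, s ∈ f.roots.toFinset ↔ a * s ^ Q * s + b * s ^ Q + c * s + d = 0 := by
    intro s
    rw [Multiset.mem_toFinset, mem_roots hf0, IsRoot.def, hf]
    simp [pow_succ, mul_assoc]
  by_cases ha : a = 0
  · have hb : b ≠ 0 := by rintro rfl; simp [ha] at h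
    have hdeg : f.natDegree = Q := by
      rw [hf, ha, C_0, zero_mul, zero_add]
      have : Q ≠ 0 := by omega
      have : Q ≠ 1 := by omega
      compute_degree! 
      all_goals first | omega | (split_ifs <;> simp_all)
    have : {o : Option k | a * sC o ^ Q * sC o + b * sC o ^ Q * tC o + c * tC o ^ Q * sC o
      + d * tC o ^ Q * tC o = 0} = ((Finset.insertNone f.roots.toFinset : Finset (Option k)) : Set (Option k)) := by
      ext o
      cases o with
      | none => simp [sC, tC, ha]; right; omega
      | some s => simp only [Set.mem_ofPred_eq, Finset.mem_coe, Finset.some_mem_insertNone, hev]; simp [sC, tC]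
    rw [this, Set.ncard_coe_finset, Finset.card_insertNone, hcard, hdeg]
  · have hdeg : f.natDegree = Q + 1 := by
      rw [hf]
      have : Q ≠ 0 := by omega
      have : Q ≠ 1 := by omega
      compute_degree!
      all_goals first | omega | (split_ifs <;> simp_all)
    have : {o : Option k | a * sC o ^ Q * sC o + b * sC o ^ Q * tC o + c * tC o ^ Q * sC o
      + d * tC o ^ Q * tC o = 0} = ((f.roots.toFinset.map Function.Embedding.some : Finset (Option k)) : Set (Option k)) := by
      ext o
      cases o with
      | none => 
        have : Q ≠ 0 := by omega
        simp [sC, tC, ha, this]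
      | some s => 
        simp only [Set.mem_ofPred_eq, Finset.mem_coe, Finset.mem_map, Function.Embedding.some_apply, Option.some.injEq, exists_eq_right, hev]; simp [sC, tC]
    rw [this, Set.ncard_coe_finset, Finset.card_map, hcard, hdeg]

/-- The sesquilinear-type form attached to `A`. -/
def FB {k : Type*} [Field k] (q : ℕ) (A : Matrix (Fin 4) (Fin 4) k) (x y : Fin 4 → k) : k :=
  ∑ i, ∑ j, A i j * x i ^ q * y j

section
variable {k : Type*} [Field k]

theorem frobForm_eq (q : ℕ) (A : Matrix (Fin 4) (Fin 4) k) (x : Fin 4 → k) :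
    frobForm q A x = FB q A x x := rfl

theorem FB_add_right (q : ℕ) (A : Matrix (Fin 4) (Fin 4) k) (x y z : Fin 4 → k) :
    FB q A x (y + z) = FB q A x y + FB q A x z := by
  simp only [FB, Pi.add_apply, mul_add, Finset.sum_add_distrib]

theorem FB_smul_right (q : ℕ) (A : Matrix (Fin 4) (Fin 4) k) (a : k) (x y : Fin 4 → k) :
    FB q A x (a • y) = a * FB q A x y := by
  simp only [FB, Pi.smul_apply, smul_eq_mul, Finset.mul_sum]
  refine Finset.sum_congr rfl fun i _ => Finset.sum_congr rfl fun j _ => by ring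

theorem FB_smul_left (q : ℕ) (A : Matrix (Fin 4) (Fin 4) k) (a : k) (x y : Fin 4 → k) :
    FB q A (a • x) y = a ^ q * FB q A x y := by
  simp only [FB, Pi.smul_apply, smul_eq_mul, Finset.mul_sum, mul_pow]
  refine Finset.sum_congr rfl fun i _ => Finset.sum_congr rfl fun j _ => by ring

theorem add_pow_q (p e q : ℕ) (hp : p.Prime) (hchar : CharP k p) (hq : q = p ^ e) (x y : k) :
    (x + y) ^ q = x ^ q + y ^ q := by
  have : Fact p.Prime := ⟨hp⟩
  rw [hq]; exact add_pow_char_pow x y p e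

theorem FB_add_left (p e q : ℕ) (hp : p.Prime) (hchar : CharP k p) (hq : q = p ^ e)
    (A : Matrix (Fin 4) (Fin 4) k) (x y z : Fin 4 → k) :
    FB q A (x + y) z = FB q A x z + FB q A y z := by
  simp only [FB, Pi.add_apply, add_pow_q p e q hp hchar hq, mul_add, add_mul,
    Finset.sum_add_distrib]

theorem FB_rad_right (q : ℕ) (hq : q ≠ 0) (A : Matrix (Fin 4) (Fin 4) k) (hA : IsUnit A)
    (y : Fin 4 → k) (h : ∀ x, FB q A x y = 0) : y = 0 := by
  apply Matrix.mulVec_injective_of_isUnit hA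
  rw [Matrix.mulVec_zero]
  ext i
  have := h (Pi.single i 1)
  simpa [FB, Matrix.mulVec, dotProduct, Pi.single_apply, ite_pow, hq] using this

theorem FB_rad_left (q : ℕ) (hq : q ≠ 0) (A : Matrix (Fin 4) (Fin 4) k) (hA : IsUnit A)
    (x : Fin 4 → k) (h : ∀ y, FB q A x y = 0) : x = 0 := by
  have h1 : (fun i => x i ^ q) = 0 := by
    apply Matrix.vecMul_injective_of_isUnit hA
    show Matrix.vecMul _ A = Matrix.vecMul _ A
    rw [Matrix.zero_vecMul]
    ext j
    have := h (Pi.single j 1)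
    simpa [FB, Matrix.vecMul, dotProduct, Pi.single_apply, mul_comm] using this
  ext i
  exact eq_zero_of_pow_eq_zero (congrFun h1 i)

theorem isotropic [IsAlgClosed k] (p e q : ℕ) (hp : p.Prime) (hchar : CharP k p) (he : 1 ≤ e)
    (hq : q = p ^ e) (A : Matrix (Fin 4) (Fin 4) k) (M : Submodule k (Fin 4 → k))
    (hM : (M : Set (Fin 4 → k)) ⊆ extremalCone k q A) (x y : Fin 4 → k) (hx : x ∈ M)
    (hy : y ∈ M) : FB q A x y = 0 := by
  have hal := FB_add_left p e q hp hchar hq A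
  have hz : ∀ z ∈ M, FB q A z z = 0 := fun z hz => hM hz
  have hQ2 : 2 ≤ q := by
    rw [hq]; exact hp.two_le.trans (Nat.le_self_pow (by omega) p)
  have key : ∀ t : k, t ^ q * FB q A y x + t * FB q A x y = 0 := by
    intro t
    have := hz _ (M.add_mem hx (M.smul_mem t hy))
    rw [hal, FB_add_right, FB_add_right, FB_smul_left, FB_smul_left, FB_smul_right,
      FB_smul_right, hz x hx, hz y hy] at this
    linear_combination this
  have h1 := key 1
  rw [one_pow, one_mul, one_mul] at h1
  have hne : (Polynomial.X ^ q - Polynomial.X : Polynomial k) ≠ 0 := by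
    rw [hq]; exact FiniteField.X_pow_card_pow_sub_X_ne_zero k (by omega) hp.one_lt
  obtain ⟨t, ht⟩ : ∃ t : k, (Polynomial.X ^ q - Polynomial.X : Polynomial k).eval t ≠ 0 := by
    by_contra hcon
    push Not at hcon
    exact hne (Polynomial.funext fun r => by rw [hcon r, Polynomial.eval_zero])
  simp only [Polynomial.eval_sub, Polynomial.eval_pow, Polynomial.eval_X] at ht
  have h2 : (t ^ q - t) * FB q A x y = 0 := by linear_combination t ^ q * h1 - key t
  exact (mul_eq_zero.mp h2).resolve_left ht

theorem option_eq (o o' : Option k) (b : k) (h1 : sC o' = b * sC o) (h2 : tC o' = b * tC o) :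
    o = o' := by
  cases o <;> cases o' <;> simp_all [sC, tC]
  · rcases h2 with h | h <;> simp [h] at h1
  · simp [← h2]

theorem st_ne (o : Option k) : ¬ (sC o = 0 ∧ tC o = 0) := by
  cases o <;> simp [sC, tC]

theorem exists_option (s t : k) (h : ¬ (s = 0 ∧ t = 0)) :
    ∃ (o : Option k) (b : k), b ≠ 0 ∧ s = b * sC o ∧ t = b * tC o := by
  by_cases ht : t = 0
  · exact ⟨none, s, by tauto, by simp [sC], by simp [tC, ht]⟩
  · exact ⟨some (s / t), t, ht, by simp [sC]; field_simp, by simp [tC]⟩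

theorem finrank_pair (x y : Fin 4 → k) (h : ∀ a b : k, a • x + b • y = 0 → a = 0 ∧ b = 0) :
    finrank k (Submodule.span k {x, y}) = 2 := by
  have hli : LinearIndependent k ![x, y] := LinearIndependent.pair_iff.mpr h
  have := finrank_span_eq_card hli
  have hr : Set.range ![x, y] = {x, y} := by
    simp only [Matrix.range_cons, Matrix.range_empty, Set.union_empty]; rfl
  rw [hr] at this
  simpa using this

theorem star_card [IsAlgClosed k] (p e q : ℕ) (hp : p.Prime) (hchar : CharP k p) (he : 1 ≤ e)
    (hq : q = p ^ e) (A : Matrix (Fin 4) (Fin 4) k) (v v' m : Fin 4 → k)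
    (hli : ∀ a b c : k, a • v + b • v' + c • m = 0 → a = 0 ∧ b = 0 ∧ c = 0)
    (hspan : ∀ x, FB q A v x = 0 → FB q A x v = 0 → ∃ a b c : k, x = a • v + b • v' + c • m)
    (hvv : FB q A v v = 0) (hvv' : FB q A v v' = 0) (hv'v : FB q A v' v = 0)
    (hvm : FB q A v m = 0) (hmv : FB q A m v = 0) (hv'v' : FB q A v' v' = 0)
    (hv'm : FB q A v' m ≠ 0) (hmv' : FB q A m v' ≠ 0) :
    {M | IsLineOn (extremalCone k q A) M ∧ Submodule.span k {v} ≤ M}.ncard = q + 1 := by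
  have hal := FB_add_left p e q hp hchar hq A
  have hcount := roots_count p e q hp hchar he hq 0 (FB q A v' m) (FB q A m v') (FB q A m m)
    (by simp [hv'm, hmv'])
  have hv'' : ∀ o : Option k, FB q A (sC o • v' + tC o • m) (sC o • v' + tC o • m) =
    0 * sC o ^ q * sC o + FB q A v' m * sC o ^ q * tC o + FB q A m v' * tC o ^ q * sC o
      + FB q A m m * tC o ^ q * tC o := by
    intro o
    simp only [hal, FB_add_right, FB_smul_left, FB_smul_right, hv'v']
    ring
  have hpair : ∀ o : Option k, finrank k (Submodule.span k {v, sC o • v' + tC o • m}) = 2 := by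
    intro o
    apply finrank_pair
    intro a b hab
    have := hli a (b * sC o) (b * tC o) (by rw [← hab]; module)
    refine ⟨this.1, ?_⟩
    by_contra hb
    exact st_ne o (by simpa [hb] using this.2)
  rw [← hcount]
  have himg : {M | IsLineOn (extremalCone k q A) M ∧ Submodule.span k {v} ≤ M} =
      (fun o : Option k => Submodule.span k {v, sC o • v' + tC o • m}) ''
      {o : Option k | 0 * sC o ^ q * sC o + FB q A v' m * sC o ^ q * tC o
        + FB q A m v' * tC o ^ q * sC o + FB q A m m * tC o ^ q * tC o = 0} := by
    ext M
    simp only [Set.mem_ofPred_eq, Set.mem_image]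
    constructor
    · rintro ⟨⟨hM2, hMX⟩, hvM⟩
      have hiso := isotropic p e q hp hchar he hq A M hMX
      have hvM' : v ∈ M := hvM (Submodule.mem_span_singleton_self v)
      obtain ⟨x, hxM, hx⟩ : ∃ x ∈ M, x ∉ Submodule.span k {v} := by
        by_contra hcon
        push Not at hcon
        have h1 : M ≤ Submodule.span k {v} := hcon
        have h2 := Submodule.finrank_mono h1
        have h3 := finrank_span_le_card (R := k) ({v} : Set (Fin 4 → k))
        simp only [Set.toFinset_singleton, Finset.card_singleton] at h3
        have h4 : finrank k M = 2 := hM2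
        omega
      obtain ⟨a, b, c, rfl⟩ := hspan x (hiso v x hvM' hxM) (hiso x v hxM hvM')
      have hbc : ¬ (b = 0 ∧ c = 0) := by
        rintro ⟨rfl, rfl⟩
        exact hx (Submodule.mem_span_singleton.mpr ⟨a, by module⟩)
      obtain ⟨o, r, hr, rfl, rfl⟩ := exists_option b c hbc
      have hy : sC o • v' + tC o • m ∈ M := by
        have h1 := M.smul_mem r⁻¹ (M.sub_mem hxM (M.smul_mem a hvM'))
        convert h1 using 1
        rw [show a • v + (r * sC o) • v' + (r * tC o) • m - a • v =
          r • (sC o • v' + tC o • m) by module, smul_smul, inv_mul_cancel₀ hr, one_smul]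
      refine ⟨o, by rw [← hv'']; exact hiso _ _ hy hy, ?_⟩
      apply Submodule.eq_of_le_of_finrank_eq
      · rw [Submodule.span_le]
        rintro z (rfl | rfl)
        · exact hvM'
        · exact hy
      · rw [hpair]; exact hM2.symm
    · rintro ⟨o, ho, rfl⟩
      refine ⟨⟨hpair o, ?_⟩, Submodule.span_mono (by simp)⟩
      intro z hz
      obtain ⟨a, b, rfl⟩ := Submodule.mem_span_pair.mp hz
      show FB q A _ _ = 0
      rw [← hv''] at ho
      generalize hy : sC o • v' + tC o • m = y at *
      have h1 : FB q A v y = 0 := by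
        rw [← hy, FB_add_right, FB_smul_right, FB_smul_right, hvv', hvm]; ring
      have h2 : FB q A y v = 0 := by
        rw [← hy, hal, FB_smul_left, FB_smul_left, hv'v, hmv]; ring
      simp only [hal, FB_add_right, FB_smul_left, FB_smul_right, hvv, h1, h2, ho]
      ring
  rw [himg]
  apply Set.ncard_image_of_injective
  intro o o' h
  have h' : Submodule.span k {v, sC o • v' + tC o • m} =
    Submodule.span k {v, sC o' • v' + tC o' • m} := h
  have : sC o' • v' + tC o' • m ∈ Submodule.span k {v, sC o • v' + tC o • m} := by
    rw [h']; exact Submodule.subset_span (by simp)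
  obtain ⟨a, b, hab⟩ := Submodule.mem_span_pair.mp this
  have := hli a (b * sC o - sC o') (b * tC o - tC o') (by
    have := sub_eq_zero.mpr hab
    rw [← this]; module)
  exact option_eq o o' b (by linear_combination -this.2.1) (by linear_combination -this.2.2)
end

section
variable {k : Type*} [Field k]

theorem exists_pair (L : Submodule k (Fin 4 → k)) (hL : finrank k L = 2) :
    ∃ u1 u2 : Fin 4 → k, (∀ a b : k, a • u1 + b • u2 = 0 → a = 0 ∧ b = 0) ∧
      ∀ x, x ∈ L ↔ ∃ s t : k, x = s • u1 + t • u2 := by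
  let B := finBasisOfFinrankEq k L hL
  refine ⟨B 0, B 1, ?_, ?_⟩
  · intro a b hab
    have h1 : a • B 0 + b • B 1 = 0 := by
      apply Subtype.ext; simpa using hab
    have h2 := B.linearIndependent
    rw [Fintype.linearIndependent_iff] at h2
    have h3 := h2 ![a, b] (by simpa [Fin.sum_univ_two] using h1)
    exact ⟨by simpa using h3 0, by simpa using h3 1⟩
  · intro x
    constructor
    · intro hx
      have h := B.sum_repr ⟨x, hx⟩
      rw [Fin.sum_univ_two] at h
      have h' := congrArg Subtype.val h
      exact ⟨_, _, by simpa using h'.symm⟩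
    · rintro ⟨s, t, rfl⟩
      exact L.add_mem (L.smul_mem _ (B 0).2) (L.smul_mem _ (B 1).2)

theorem exists_frame (L : Submodule k (Fin 4 → k)) (hL : finrank k L = 2) :
    ∃ u1 u2 w1 w2 : Fin 4 → k,
      (∀ s t a b : k, s • u1 + t • u2 + a • w1 + b • w2 = 0 → s = 0 ∧ t = 0 ∧ a = 0 ∧ b = 0) ∧
      (∀ x, ∃ s t a b : k, x = s • u1 + t • u2 + a • w1 + b • w2) ∧
      ∀ x, x ∈ L ↔ ∃ s t : k, x = s • u1 + t • u2 := by
  obtain ⟨L', hL'⟩ := L.exists_isCompl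
  have h4 := Submodule.finrank_add_eq_of_isCompl hL'
  rw [hL, finrank_fin_fun] at h4
  obtain ⟨u1, u2, hu, hLu⟩ := exists_pair L hL
  obtain ⟨w1, w2, hw, hLw⟩ := exists_pair L' (by omega)
  refine ⟨u1, u2, w1, w2, ?_, ?_, hLu⟩
  · intro s t a b h
    have h1 : s • u1 + t • u2 ∈ L := (hLu _).2 ⟨s, t, rfl⟩
    have h2 : s • u1 + t • u2 ∈ L' := by
      refine (hLw _).2 ⟨-a, -b, ?_⟩
      rw [← sub_eq_zero, ← h]; module
    have h3 : s • u1 + t • u2 = 0 := by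
      have := hL'.disjoint.le_bot (Submodule.mem_inf.2 ⟨h1, h2⟩)
      simpa using this
    have h5 : a • w1 + b • w2 = 0 := by
      rw [h3, zero_add] at h; exact h
    exact ⟨(hu _ _ h3).1, (hu _ _ h3).2, (hw _ _ h5).1, (hw _ _ h5).2⟩
  · intro x
    have hx : x ∈ L ⊔ L' := by rw [hL'.sup_eq_top]; trivial
    obtain ⟨y, hy, z, hz, rfl⟩ := Submodule.mem_sup.mp hx
    obtain ⟨s, t, rfl⟩ := (hLu _).1 hy
    obtain ⟨a, b, rfl⟩ := (hLw _).1 hz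
    exact ⟨s, t, a, b, by module⟩

/-- A matrix with no nonzero kernel vector has nonzero determinant. -/
theorem det_ne_of_ker (a b c d : k)
    (h : ∀ s t : k, s * a + t * b = 0 → s * c + t * d = 0 → s = 0 ∧ t = 0) :
    a * d - b * c ≠ 0 := by
  intro h0
  have h1 := h b (-a) (by ring) (by linear_combination -h0)
  have h2 := h d (-c) (by linear_combination h0) (by ring)
  have h3 := h 1 0 (by simp at h1; simp [h1]) (by simp at h2; simp [h2])
  exact one_ne_zero h3.1

theorem ker_of_det (a b c d s t : k) (hst : ¬ (s = 0 ∧ t = 0))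
    (h1 : s * a + t * b = 0) (h2 : s * c + t * d = 0) : a * d - b * c = 0 := by
  by_cases hs : s = 0
  · have ht : t ≠ 0 := fun h => hst ⟨hs, h⟩
    apply (mul_eq_zero.mp (?_ : t * (a * d - b * c) = 0)).resolve_left ht
    linear_combination a * h2 - c * h1
  · apply (mul_eq_zero.mp (?_ : s * (a * d - b * c) = 0)).resolve_left hs
    linear_combination d * h1 - b * h2

theorem main_aux [IsAlgClosed k]
    (p e q : ℕ) (hp : p.Prime) (hchar : CharP k p) (he : 1 ≤ e) (hq : q = p ^ e)
    (A : Matrix (Fin 4) (Fin 4) k) (hA : IsUnit A)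
    (L : Submodule k (Fin 4 → k)) (hL : IsLineOn (extremalCone k q A) L) :
    {c : Submodule k (Fin 4 → k) |
        IsStarPoint q (extremalCone k q A) c ∧ c ≤ L}.ncard = q ^ 2 + 1 ∧
    ∀ c, IsStarPoint q (extremalCone k q A) c → c ≤ L →
      {M | IsLineOn (extremalCone k q A) M ∧ c ≤ M}.ncard = q + 1 := by
  have hal := FB_add_left p e q hp hchar hq A
  have hQ2 : 2 ≤ q := by
    rw [hq]; exact hp.two_le.trans (Nat.le_self_pow (by omega) p)
  have hapq := add_pow_q (k := k) p e q hp hchar hq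
  have hiso := isotropic p e q hp hchar he hq A L hL.2
  obtain ⟨u1, u2, w1, w2, hind, hdec, hLm⟩ := exists_frame L hL.1
  have hu1 : u1 ∈ L := (hLm _).2 ⟨1, 0, by module⟩
  have hu2 : u2 ∈ L := (hLm _).2 ⟨0, 1, by module⟩
  have hnegq : ∀ x : k, (-x) ^ q = - x ^ q := by
    intro x
    have := hapq x (-x)
    rw [add_neg_cancel, zero_pow (by omega)] at this
    linear_combination -this
  -- radical statements on `L`
  have hradl : ∀ l ∈ L, FB q A l w1 = 0 → FB q A l w2 = 0 → l = 0 := by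
    intro l hl h1 h2
    apply FB_rad_left q (by omega) A hA
    intro y
    obtain ⟨s, t, a, b, rfl⟩ := hdec y
    simp only [FB_add_right, FB_smul_right, h1, h2, hiso l _ hl hu1, hiso l _ hl hu2]
    ring
  have hradr : ∀ l ∈ L, FB q A w1 l = 0 → FB q A w2 l = 0 → l = 0 := by
    intro l hl h1 h2
    apply FB_rad_right q (by omega) A hA
    intro y
    obtain ⟨s, t, a, b, rfl⟩ := hdec y
    simp only [hal, FB_smul_left, h1, h2, hiso _ l hu1 hl, hiso _ l hu2 hl]
    ring
  have hindu : ∀ s t : k, s • u1 + t • u2 = 0 → s = 0 ∧ t = 0 := by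
    intro s t h
    have := hind s t 0 0 (by rw [← h]; module)
    exact ⟨this.1, this.2.1⟩
  have hP : FB q A w1 u1 * FB q A w2 u2 - FB q A w1 u2 * FB q A w2 u1 ≠ 0 := by
    apply det_ne_of_ker
    intro s t h1 h2
    apply hindu
    apply hradr _ ((hLm _).2 ⟨s, t, rfl⟩)
    · simpa only [FB_add_right, FB_smul_right] using h1
    · simpa only [FB_add_right, FB_smul_right] using h2
  have hN : FB q A u1 w1 * FB q A u2 w2 - FB q A u2 w1 * FB q A u1 w2 ≠ 0 := by
    apply det_ne_of_ker
    intro s t h1 h2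
    obtain ⟨s, rfl⟩ := IsAlgClosed.exists_pow_nat_eq s (by omega : 0 < q)
    obtain ⟨t, rfl⟩ := IsAlgClosed.exists_pow_nat_eq t (by omega : 0 < q)
    have := hindu s t (by
      apply hradl _ ((hLm _).2 ⟨s, t, rfl⟩)
      · simpa only [hal, FB_smul_left] using h1
      · simpa only [hal, FB_smul_left] using h2)
    rw [this.1, this.2]
    simp; omega
  -- a point on `L` with two lines
  have claimB : ∀ v ∈ L, v ≠ 0 → ∀ M, IsLineOn (extremalCone k q A) M → v ∈ M → M ≠ L →
      FB q A w1 v * FB q A v w2 ^ q - FB q A w2 v * FB q A v w1 ^ q = 0 := by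
    intro v hv hv0 M hM hvM hML
    have hisoM := isotropic p e q hp hchar he hq A M hM.2
    obtain ⟨x, hxM, hxL⟩ : ∃ x ∈ M, x ∉ L := by
      by_contra hcon
      push Not at hcon
      exact hML (Submodule.eq_of_le_of_finrank_eq hcon (hM.1.trans hL.1.symm))
    obtain ⟨s, t, a, b, rfl⟩ := hdec x
    have hab : ¬ (a ^ q = 0 ∧ b ^ q = 0) := by
      rintro ⟨ha, hb⟩
      have ha := eq_zero_of_pow_eq_zero ha
      have hb := eq_zero_of_pow_eq_zero hb
      exact hxL ((hLm _).2 ⟨s, t, by rw [ha, hb]; module⟩)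
    have h1 := hisoM _ _ hvM hxM
    have h2 := hisoM _ _ hxM hvM
    simp only [FB_add_right, FB_smul_right, hiso _ _ hv hu1, hiso _ _ hv hu2, mul_zero,
      zero_add] at h1
    simp only [hal, FB_smul_left, hiso _ _ hu1 hv, hiso _ _ hu2 hv, mul_zero, zero_add] at h2
    have h3 : a ^ q * FB q A v w1 ^ q + b ^ q * FB q A v w2 ^ q = 0 := by
      rw [← mul_pow, ← mul_pow, ← hapq, h1, zero_pow (by omega)]
    have := ker_of_det _ _ _ _ _ _ hab h2 h3
    linear_combination this
  -- a point on `L` where the determinant vanishes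
  have claimC : ∀ v ∈ L, v ≠ 0 →
      FB q A w1 v * FB q A v w2 ^ q - FB q A w2 v * FB q A v w1 ^ q = 0 →
      {M | IsLineOn (extremalCone k q A) M ∧ Submodule.span k {v} ≤ M}.ncard = q + 1 := by
    intro v hv hv0 hD
    have hα : ¬ (FB q A v w2 = 0 ∧ FB q A v w1 = 0) := by
      rintro ⟨h2, h1⟩
      exact hv0 (hradl v hv h1 h2)
    obtain ⟨v', hv', hLv⟩ : ∃ v' ∈ L, ∀ s t : k, ∃ a b : k,
        s • u1 + t • u2 = a • v + b • v' := by
      obtain ⟨s0, t0, rfl⟩ := (hLm v).1 hv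
      by_cases h0 : t0 = 0
      · have hs0 : s0 ≠ 0 := by
          rintro rfl; apply hv0; rw [h0]; module
        refine ⟨u2, hu2, fun s t => ⟨s / s0, t, ?_⟩⟩
        have : s = s / s0 * s0 := by field_simp
        rw [h0]; nth_rw 1 [this]; module
      · refine ⟨u1, hu1, fun s t => ⟨t / t0, s - t / t0 * s0, ?_⟩⟩
        have : t = t / t0 * t0 := by field_simp
        nth_rw 1 [this]; module
    set m := FB q A v w2 • w1 + (- FB q A v w1) • w2 with hm
    have hdetm : ∀ l : Fin 4 → k, FB q A l m = FB q A l w1 * FB q A v w2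
        - FB q A l w2 * FB q A v w1 := by
      intro l; rw [hm, FB_add_right, FB_smul_right, FB_smul_right]; ring
    have hdetm' : ∀ l : Fin 4 → k, FB q A m l = FB q A w1 l * FB q A v w2 ^ q
        - FB q A w2 l * FB q A v w1 ^ q := by
      intro l; rw [hm, hal, FB_smul_left, FB_smul_left, hnegq]; ring
    have hvm : FB q A v m = 0 := by rw [hdetm]; ring
    have hmv : FB q A m v = 0 := by rw [hdetm']; exact hD
    have hv'm : FB q A v' m ≠ 0 := by
      intro h0
      have hall : ∀ s t : k, FB q A (s • u1 + t • u2) m = 0 := by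
        intro s t
        obtain ⟨a, b, hab⟩ := hLv s t
        rw [hab, hal, FB_smul_left, FB_smul_left, hvm, h0]; ring
      have h1 := hall 1 0
      have h2 := hall 0 1
      rw [one_smul, zero_smul, add_zero, hdetm] at h1
      rw [one_smul, zero_smul, zero_add, hdetm] at h2
      refine hN ?_
      have := ker_of_det (FB q A u1 w1) (FB q A u1 w2) (FB q A u2 w1) (FB q A u2 w2)
        (FB q A v w2) (- FB q A v w1) (by rw [neg_eq_zero]; exact hα)
        (by linear_combination h1) (by linear_combination h2)
      linear_combination this
    have hmv' : FB q A m v' ≠ 0 := by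
      intro h0
      have hall : ∀ s t : k, FB q A m (s • u1 + t • u2) = 0 := by
        intro s t
        obtain ⟨a, b, hab⟩ := hLv s t
        rw [hab, FB_add_right, FB_smul_right, FB_smul_right, hmv, h0]; ring
      have h1 := hall 1 0
      have h2 := hall 0 1
      rw [one_smul, zero_smul, add_zero, hdetm'] at h1
      rw [one_smul, zero_smul, zero_add, hdetm'] at h2
      refine hP ?_
      have := ker_of_det (FB q A w1 u1) (FB q A w2 u1) (FB q A w1 u2) (FB q A w2 u2)
        (FB q A v w2 ^ q) (- FB q A v w1 ^ q) (by
          rintro ⟨h, h'⟩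
          rw [neg_eq_zero] at h'
          exact hα ⟨eq_zero_of_pow_eq_zero h, eq_zero_of_pow_eq_zero h'⟩)
        (by linear_combination h1) (by linear_combination h2)
      linear_combination this
    refine star_card p e q hp hchar he hq A v v' m ?_ ?_ (hiso _ _ hv hv) (hiso _ _ hv hv')
      (hiso _ _ hv' hv) hvm hmv (hiso _ _ hv' hv') hv'm hmv'
    · intro a b c h
      have h1 : FB q A (a • v + b • v' + c • m) v' = 0 := by
        rw [h]; simpa [show q ≠ 0 by omega] using FB_smul_left q A 0 0 v'
      rw [hal, hal, FB_smul_left, FB_smul_left, FB_smul_left, hiso _ _ hv hv', hiso _ _ hv' hv',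
        mul_zero, mul_zero, zero_add, zero_add] at h1
      have hc : c = 0 := eq_zero_of_pow_eq_zero ((mul_eq_zero.mp h1).resolve_right hmv')
      have h2 : FB q A (a • v + b • v' + c • m) m = 0 := by
        rw [h]; simpa [show q ≠ 0 by omega] using FB_smul_left q A 0 0 m
      rw [hal, hal, FB_smul_left, FB_smul_left, FB_smul_left, hvm, hc, zero_pow (by omega),
        mul_zero, zero_mul, zero_add, add_zero] at h2
      have hb : b = 0 := eq_zero_of_pow_eq_zero ((mul_eq_zero.mp h2).resolve_right hv'm)
      rw [hb, hc, zero_smul, zero_smul, add_zero, add_zero] at h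
      exact ⟨(smul_eq_zero.mp h).resolve_right hv0, hb, hc⟩
    · intro x hx _
      obtain ⟨s, t, a, b, rfl⟩ := hdec x
      simp only [FB_add_right, FB_smul_right, hiso _ _ hv hu1, hiso _ _ hv hu2, mul_zero,
        zero_add] at hx
      obtain ⟨a', b', hab⟩ := hLv s t
      obtain ⟨c, hc1, hc2⟩ : ∃ c : k, a = c * FB q A v w2 ∧ b = c * (- FB q A v w1) := by
        by_cases h2 : FB q A v w2 = 0
        · have h1 : FB q A v w1 ≠ 0 := fun h => hα ⟨h2, h⟩
          refine ⟨- b / FB q A v w1, ?_, by field_simp⟩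
          rw [h2, mul_zero, add_zero] at hx
          rw [h2, mul_zero]
          exact (mul_eq_zero.mp hx).resolve_right h1
        · refine ⟨a / FB q A v w2, by field_simp, ?_⟩
          field_simp
          linear_combination hx
      refine ⟨a', b', c, ?_⟩
      rw [hab, hm, hc1, hc2]; module
  have hgen : ∀ c : Submodule k (Fin 4 → k), IsStarPoint q (extremalCone k q A) c → c ≤ L →
      ∃ v, v ≠ 0 ∧ v ∈ L ∧ c = Submodule.span k {v} ∧
        FB q A w1 v * FB q A v w2 ^ q - FB q A w2 v * FB q A v w1 ^ q = 0 := by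
    rintro c ⟨S, hc, hS, hSL⟩ hcL
    obtain ⟨v, hv0, hv⟩ := finrank_eq_one_iff'.1 (show finrank k c = 1 from hc)
    have hcv : c = Submodule.span k {(v : Fin 4 → k)} := by
      apply le_antisymm
      · intro x hx
        obtain ⟨a, ha⟩ := hv ⟨x, hx⟩
        exact Submodule.mem_span_singleton.2 ⟨a, congrArg Subtype.val ha⟩
      · rw [Submodule.span_singleton_le_iff_mem]; exact v.2
    have hv0' : (v : Fin 4 → k) ≠ 0 := fun h => hv0 (Subtype.ext h)
    refine ⟨v, hv0', hcL v.2, hcv, ?_⟩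
    obtain ⟨M, hM, hML⟩ := Set.exists_ne_of_one_lt_ncard (by omega : 1 < S.ncard) L
    exact claimB v (hcL v.2) hv0' M (hSL M hM).1 ((hSL M hM).2 v.2) hML
  refine ⟨?_, ?_⟩
  · have hdet : (FB q A w1 u1 * FB q A u1 w2 ^ q - FB q A w2 u1 * FB q A u1 w1 ^ q) *
        (FB q A w1 u2 * FB q A u2 w2 ^ q - FB q A w2 u2 * FB q A u2 w1 ^ q) -
        (FB q A w1 u2 * FB q A u1 w2 ^ q - FB q A w2 u2 * FB q A u1 w1 ^ q) *
        (FB q A w1 u1 * FB q A u2 w2 ^ q - FB q A w2 u1 * FB q A u2 w1 ^ q) ≠ 0 := by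
      have h1 := mul_ne_zero hP (pow_ne_zero q hN)
      rw [sub_eq_add_neg (FB q A u1 w1 * FB q A u2 w2), hapq, hnegq, mul_pow, mul_pow] at h1
      intro h
      apply h1
      first | linear_combination h | linear_combination -h
    have hcount := roots_count p (e * 2) (q ^ 2) hp hchar (by omega) (by rw [hq, pow_mul])
      _ _ _ _ hdet
    rw [← hcount]
    have hform : ∀ s t : k, FB q A w1 (s • u1 + t • u2) * FB q A (s • u1 + t • u2) w2 ^ q
        - FB q A w2 (s • u1 + t • u2) * FB q A (s • u1 + t • u2) w1 ^ q =
        (FB q A w1 u1 * FB q A u1 w2 ^ q - FB q A w2 u1 * FB q A u1 w1 ^ q) * s ^ q ^ 2 * s +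
        (FB q A w1 u2 * FB q A u1 w2 ^ q - FB q A w2 u2 * FB q A u1 w1 ^ q) * s ^ q ^ 2 * t +
        (FB q A w1 u1 * FB q A u2 w2 ^ q - FB q A w2 u1 * FB q A u2 w1 ^ q) * t ^ q ^ 2 * s +
        (FB q A w1 u2 * FB q A u2 w2 ^ q - FB q A w2 u2 * FB q A u2 w1 ^ q) * t ^ q ^ 2 * t := by
      intro s t
      simp only [FB_add_right, FB_smul_right, hal, FB_smul_left, hapq, mul_pow]
      rw [sq q, pow_mul, pow_mul]
      ring
    have himg : {c : Submodule k (Fin 4 → k) |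
        IsStarPoint q (extremalCone k q A) c ∧ c ≤ L} =
        (fun o : Option k => Submodule.span k {sC o • u1 + tC o • u2}) ''
        {o : Option k |
        (FB q A w1 u1 * FB q A u1 w2 ^ q - FB q A w2 u1 * FB q A u1 w1 ^ q)
          * sC o ^ q ^ 2 * sC o +
        (FB q A w1 u2 * FB q A u1 w2 ^ q - FB q A w2 u2 * FB q A u1 w1 ^ q)
          * sC o ^ q ^ 2 * tC o +
        (FB q A w1 u1 * FB q A u2 w2 ^ q - FB q A w2 u1 * FB q A u2 w1 ^ q)
          * tC o ^ q ^ 2 * sC o +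
        (FB q A w1 u2 * FB q A u2 w2 ^ q - FB q A w2 u2 * FB q A u2 w1 ^ q)
          * tC o ^ q ^ 2 * tC o = 0} := by
      ext c
      simp only [Set.mem_ofPred_eq, Set.mem_image, ← hform]
      constructor
      · rintro ⟨hc, hcL⟩
        obtain ⟨v, hv0, hvL, rfl, hD⟩ := hgen c hc hcL
        obtain ⟨M0, hstar⟩ := hc
        obtain ⟨s, t, rfl⟩ := (hLm v).1 hvL
        obtain ⟨o, b, hb, rfl, rfl⟩ := exists_option s t (by
          rintro ⟨rfl, rfl⟩; apply hv0; module)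
        have heq : (b * sC o) • u1 + (b * tC o) • u2 = b • (sC o • u1 + tC o • u2) := by module
        have hspan : Submodule.span k {(b * sC o) • u1 + (b * tC o) • u2} =
            Submodule.span k {sC o • u1 + tC o • u2} := by
          rw [heq]; exact Submodule.span_singleton_smul_eq (IsUnit.mk0 b hb) _
        refine ⟨o, ?_, hspan.symm⟩
        rw [heq] at hD
        simp only [FB_smul_right, FB_smul_left] at hD
        have : b * (b ^ q) ^ q ≠ 0 := mul_ne_zero hb (pow_ne_zero _ (pow_ne_zero _ hb))
        apply (mul_eq_zero.mp (?_ : (b * (b ^ q) ^ q) * _ = 0)).resolve_left this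
        rw [← hD]; ring
      · rintro ⟨o, ho, rfl⟩
        have hv0 : sC o • u1 + tC o • u2 ≠ 0 := fun h => st_ne o (hindu _ _ h)
        have hvL : sC o • u1 + tC o • u2 ∈ L := (hLm _).2 ⟨_, _, rfl⟩
        refine ⟨⟨_, finrank_span_singleton hv0, claimC _ hvL hv0 ho, fun M hM => hM⟩, ?_⟩
        rw [Submodule.span_singleton_le_iff_mem]; exact hvL
    rw [himg]
    apply Set.ncard_image_of_injective
    intro o o' h
    have h' : Submodule.span k {sC o • u1 + tC o • u2} =
      Submodule.span k {sC o' • u1 + tC o' • u2} := h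
    have : sC o' • u1 + tC o' • u2 ∈ Submodule.span k {sC o • u1 + tC o • u2} := by
      rw [h']; exact Submodule.mem_span_singleton_self _
    obtain ⟨b, hab⟩ := Submodule.mem_span_singleton.mp this
    have := hindu (b * sC o - sC o') (b * tC o - tC o') (by
      have := sub_eq_zero.mpr hab
      rw [← this]; module)
    exact option_eq o o' b (by linear_combination -this.1) (by linear_combination -this.2)
  · intro c hc hcL
    obtain ⟨v, hv0, hvL, rfl, hD⟩ := hgen c hc hcL
    exact claimC v hvL hv0 hD
end

/-- Let `X` be a smooth extremal surface of degree `q+1` in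
ℙ³(k) (cut out by a full-rank Frobenius form) and let `L` be any line on `X`.
Then `L` contains exactly `q²+1` star points of `X`; equivalently, there are
exactly `q²+1` stars on `X` containing `L`. -/
theorem starcount_on_line {k : Type*} [Field k] [IsAlgClosed k]
    (p e q : ℕ) (hp : p.Prime) (hchar : CharP k p) (he : 1 ≤ e) (hq : q = p ^ e)
    (A : Matrix (Fin 4) (Fin 4) k) (hA : IsUnit A)
    (L : Submodule k (Fin 4 → k)) (hL : IsLineOn (extremalCone k q A) L) :
    {c : Submodule k (Fin 4 → k) |
        IsStarPoint q (extremalCone k q A) c ∧ c ≤ L}.ncard = q ^ 2 + 1 ∧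
    {S : Set (Submodule k (Fin 4 → k)) |
        IsStar q (extremalCone k q A) S ∧ L ∈ S}.ncard = q ^ 2 + 1 := by
  obtain ⟨h1, h2⟩ := main_aux p e q hp hchar he hq A hA L hL
  refine ⟨h1, ?_⟩
  have hQ2 : 2 ≤ q := by
    rw [hq]; exact hp.two_le.trans (Nat.le_self_pow (by omega) p)
  rw [← h1]
  have himg : {S : Set (Submodule k (Fin 4 → k)) |
        IsStar q (extremalCone k q A) S ∧ L ∈ S} =
      (fun c => {M | IsLineOn (extremalCone k q A) M ∧ c ≤ M}) ''
      {c : Submodule k (Fin 4 → k) | IsStarPoint q (extremalCone k q A) c ∧ c ≤ L} := by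
    ext S
    simp only [Set.mem_ofPred_eq, Set.mem_image]
    constructor
    · rintro ⟨⟨c, hc⟩, hLS⟩
      have hcL := (hc.2.2 L hLS).2
      refine ⟨c, ⟨⟨S, hc⟩, hcL⟩, ?_⟩
      have hcard := h2 c ⟨S, hc⟩ hcL
      symm
      apply Set.eq_of_subset_of_ncard_le
      · intro M hM
        exact hc.2.2 M hM
      · rw [hcard, hc.2.1]
      · exact Set.finite_of_ncard_ne_zero (by omega)
    · rintro ⟨c, ⟨hc, hcL⟩, rfl⟩
      have hcard := h2 c hc hcL
      obtain ⟨S, hS⟩ := hc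
      exact ⟨⟨c, hS.1, hcard, fun M hM => hM⟩, hL, hcL⟩
  rw [himg]
  apply Set.ncard_image_of_injOn
  rintro c ⟨hc, hcL⟩ c' ⟨hc', hcL'⟩ h
  have h' : {M | IsLineOn (extremalCone k q A) M ∧ c ≤ M} =
    {M | IsLineOn (extremalCone k q A) M ∧ c' ≤ M} := h
  have hcard := h2 c hc hcL
  obtain ⟨M, hM, hML⟩ := Set.exists_ne_of_one_lt_ncard (by rw [hcard]; omega) L
  have hM' := hM
  rw [h'] at hM'
  have hlt : L ⊓ M < L := by
    refine lt_of_le_of_ne inf_le_left fun heq => hML ?_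
    have hle : L ≤ M := inf_eq_left.mp heq
    exact (Submodule.eq_of_le_of_finrank_eq hle (hL.1.trans hM.1.1.symm)).symm
  have hfr := Submodule.finrank_lt_finrank_of_lt hlt
  have hL2 : finrank k L = 2 := hL.1
  obtain ⟨S, hS⟩ := hc
  obtain ⟨S', hS'⟩ := hc'
  have e1 : finrank k c = 1 := hS.1
  have e2 : finrank k c' = 1 := hS'.1
  have a1 := Submodule.eq_of_le_of_finrank_le (le_inf hcL hM.2) (by omega)
  have a2 := Submodule.eq_of_le_of_finrank_le (le_inf hcL' hM'.2) (by omega)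
  rw [a1, a2]
end

section
/- Let X be a smooth extremal surface of degree q+1 in ℙ³(k) and let L be any line on X. Then the set of lines M on X with M ≠ L and M meeting L has cardinality exactly q(q²+1). -/
open Module

def fB {k : Type*} [Field k] (q : ℕ) (A : Matrix (Fin 4) (Fin 4) k) (x y : Fin 4 → k) : k :=
  ∑ i, ∑ j, A i j * x i ^ q * y j

section
variable {k : Type*} [Field k] {p e q : ℕ} {A : Matrix (Fin 4) (Fin 4) k}

lemma fB_self (x : Fin 4 → k) : frobForm q A x = fB q A x x := rfl

lemma fB_add_left (hp : p.Prime) (hchar : CharP k p) (hq : q = p ^ e) (x y z : Fin 4 → k) :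
    fB q A (x + y) z = fB q A x z + fB q A y z := by
  have := Fact.mk hp
  subst hq
  simp only [fB, Pi.add_apply, add_pow_char_pow, ← Finset.sum_add_distrib]
  refine Finset.sum_congr rfl fun i _ => Finset.sum_congr rfl fun j _ => by ring

lemma fB_smul_left (a : k) (x z : Fin 4 → k) :
    fB q A (a • x) z = a ^ q * fB q A x z := by
  simp only [fB, Pi.smul_apply, smul_eq_mul, Finset.mul_sum]
  refine Finset.sum_congr rfl fun i _ => Finset.sum_congr rfl fun j _ => by ring

lemma fB_add_right (x y z : Fin 4 → k) :
    fB q A x (y + z) = fB q A x y + fB q A x z := by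
  simp only [fB, Pi.add_apply, ← Finset.sum_add_distrib]
  refine Finset.sum_congr rfl fun i _ => Finset.sum_congr rfl fun j _ => by ring

lemma fB_smul_right (a : k) (x z : Fin 4 → k) :
    fB q A x (a • z) = a * fB q A x z := by
  simp only [fB, Pi.smul_apply, smul_eq_mul, Finset.mul_sum]
  refine Finset.sum_congr rfl fun i _ => Finset.sum_congr rfl fun j _ => by ring

lemma fB_nondeg_right (hq0 : q ≠ 0) (hA : IsUnit A) (y : Fin 4 → k)
    (h : ∀ x, fB q A x y = 0) : y = 0 := by
  have : A.mulVec y = 0 := by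
    funext i
    have := h (Pi.single i 1)
    simp only [fB, Pi.single_apply, ite_pow, one_pow, zero_pow hq0] at this
    simpa [Matrix.mulVec, dotProduct] using this
  exact (Matrix.mulVec_injective_iff_isUnit.2 hA) (by simpa using this)

lemma fB_nondeg_left (hq0 : q ≠ 0) (hA : IsUnit A) (x : Fin 4 → k)
    (h : ∀ y, fB q A x y = 0) : x = 0 := by
  have : A.vecMul (fun i => x i ^ q) = 0 := by
    funext j
    have := h (Pi.single j 1)
    simp only [fB, Pi.single_apply] at this
    simpa [Matrix.vecMul, dotProduct, mul_comm] using this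
  have h2 : (fun i => x i ^ q) = 0 :=
    (Matrix.vecMul_injective_iff_isUnit.2 hA) (by simpa using this)
  funext i
  exact (pow_eq_zero_iff hq0).1 (congrFun h2 i)

/-- A totally null linear space is totally isotropic. -/
lemma fB_isotropic [Infinite k] (hp : p.Prime) (hchar : CharP k p) (hq : q = p ^ e) (hq2 : 2 ≤ q)
    (x y : Fin 4 → k) (h : ∀ t : k, fB q A (x + t • y) (x + t • y) = 0)
    (hy : fB q A y y = 0) : fB q A x y = 0 ∧ fB q A y x = 0 := by
  have hx : fB q A x x = 0 := by simpa using h 0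
  open Polynomial in
  have key : (C (fB q A x y) * X + C (fB q A y x) * X ^ q : k[X]) = 0 := by
    apply Polynomial.funext
    intro t
    have := h t
    simp only [fB_add_left hp hchar hq, fB_smul_left, fB_add_right, fB_smul_right, hx, hy] at this
    simp only [eval_add, eval_mul, eval_C, eval_X, eval_pow, eval_zero]
    linear_combination this
  have h1 := congrArg (fun f => Polynomial.coeff f 1) key
  have h2 := congrArg (fun f => Polynomial.coeff f q) key
  have : q ≠ 1 := by omega
  simp [Polynomial.coeff_X, Polynomial.coeff_X_pow, this.symm] at h1 h2
  exact ⟨h1, h2⟩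


/-- A frame adapted to an isotropic line spanned by `e1, e2`. -/
structure Frame (q : ℕ) (A : Matrix (Fin 4) (Fin 4) k) (e1 e2 e3 e4 : Fin 4 → k) : Prop where
  li : LinearIndependent k ![e1, e2]
  h11 : fB q A e1 e1 = 0
  h12 : fB q A e1 e2 = 0
  h21 : fB q A e2 e1 = 0
  h22 : fB q A e2 e2 = 0
  h13 : fB q A e1 e3 = 0
  h23 : fB q A e2 e3 = -1
  h14 : fB q A e1 e4 = 1
  h24 : fB q A e2 e4 = 0

lemma Frame.coeff_zero {e1 e2 e3 e4 : Fin 4 → k} (F : Frame q A e1 e2 e3 e4) (a b c d : k)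
    (h : a • e1 + b • e2 + c • e3 + d • e4 = 0) : a = 0 ∧ b = 0 ∧ c = 0 ∧ d = 0 := by
  have z : ∀ x, fB q A x 0 = 0 := fun x => by simp [fB]
  have h1 := z e1
  have h2 := z e2
  rw [← h] at h1 h2
  simp only [fB_add_right, fB_smul_right, F.h11, F.h12, F.h13, F.h14, F.h21, F.h22, F.h23,
    F.h24] at h1 h2
  have hd : d = 0 := by linear_combination h1
  have hc : c = 0 := by linear_combination -h2
  subst hd hc
  have := LinearIndependent.pair_iff.1 F.li a b (by simpa using h)
  exact ⟨this.1, this.2, rfl, rfl⟩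

lemma Frame.linInd {e1 e2 e3 e4 : Fin 4 → k} (F : Frame q A e1 e2 e3 e4) :
    LinearIndependent k ![e1, e2, e3, e4] := by
  rw [Fintype.linearIndependent_iff]
  intro g hg
  simp only [Fin.sum_univ_four] at hg
  have := F.coeff_zero (g 0) (g 1) (g 2) (g 3) hg
  intro i
  fin_cases i
  exacts [this.1, this.2.1, this.2.2.1, this.2.2.2]

lemma Frame.span {e1 e2 e3 e4 : Fin 4 → k} (F : Frame q A e1 e2 e3 e4) (x : Fin 4 → k) :
    ∃ a b c d : k, x = a • e1 + b • e2 + c • e3 + d • e4 := by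
  let B := basisOfLinearIndependentOfCardEqFinrank F.linInd (by simp)
  have := B.sum_repr x
  simp only [Fin.sum_univ_four, B, coe_basisOfLinearIndependentOfCardEqFinrank] at this
  exact ⟨_, _, _, _, this.symm⟩

lemma Frame.det_ne {e1 e2 e3 e4 : Fin 4 → k} (F : Frame q A e1 e2 e3 e4)
    (hp : p.Prime) (hchar : CharP k p) (hq : q = p ^ e) (hq2 : 2 ≤ q) (hA : IsUnit A) :
    fB q A e3 e1 * fB q A e4 e2 - fB q A e3 e2 * fB q A e4 e1 ≠ 0 := by
  have key : ∀ a b : k, a * fB q A e3 e1 + b * fB q A e3 e2 = 0 →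
      a * fB q A e4 e1 + b * fB q A e4 e2 = 0 → a = 0 ∧ b = 0 := by
    intro a b h3 h4
    have : a • e1 + b • e2 = 0 := by
      apply fB_nondeg_right (q := q) (by omega) hA
      intro x
      obtain ⟨x1, x2, x3, x4, rfl⟩ := F.span x
      simp only [fB_add_left hp hchar hq, fB_smul_left, fB_add_right, fB_smul_right, F.h11, F.h12,
        F.h21, F.h22]
      linear_combination x3 ^ q * h3 + x4 ^ q * h4
    exact LinearIndependent.pair_iff.1 F.li a b this
  intro hdet
  have k1 := key (fB q A e3 e2) (-fB q A e3 e1) (by ring) (by linear_combination -hdet)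
  have k2 := key (fB q A e4 e2) (-fB q A e4 e1) (by linear_combination hdet) (by ring)
  have k3 := key 1 0 (by linear_combination -k1.2) (by linear_combination -k2.2)
  exact one_ne_zero k3.1

lemma finrank_pair_s1 {f1 f2 : Fin 4 → k} (hli : LinearIndependent k ![f1, f2]) :
    finrank k (Submodule.span k {f1, f2}) = 2 := by
  have := finrank_span_eq_card hli
  have hr : Set.range ![f1, f2] = {f1, f2} := by
    simp [Matrix.range_cons, Matrix.range_empty]
    exact Set.pair_comm _ _
  rw [hr] at this
  simpa using this

lemma exists_dual [IsAlgClosed k] (hp : p.Prime) (hchar : CharP k p) (hq : q = p ^ e)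
    (hq2 : 2 ≤ q) (hA : IsUnit A) (f1 f2 : Fin 4 → k) (hli : LinearIndependent k ![f1, f2])
    (a b : k) : ∃ y, fB q A f1 y = a ∧ fB q A f2 y = b := by
  let T : (Fin 4 → k) →ₗ[k] k × k :=
    { toFun := fun y => (fB q A f1 y, fB q A f2 y)
      map_add' := fun x y => by simp [fB_add_right]
      map_smul' := fun c y => by simp [fB_smul_right] }
  have hT : LinearMap.range T = ⊤ := by
    by_contra hne
    obtain ⟨f, hf0, hf⟩ := Submodule.exists_le_ker_of_lt_top _ (lt_top_iff_ne_top.2 hne)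
    have hfe : ∀ u v : k, f (u, v) = u * f (1, 0) + v * f (0, 1) := by
      intro u v
      have : ((u, v) : k × k) = u • (1, 0) + v • (0, 1) := by simp
      rw [this, map_add, map_smul, map_smul]; rfl
    obtain ⟨α, hα⟩ := IsAlgClosed.exists_pow_nat_eq (f (1, 0)) (n := q) (by omega)
    obtain ⟨β, hβ⟩ := IsAlgClosed.exists_pow_nat_eq (f (0, 1)) (n := q) (by omega)
    have h0 : α • f1 + β • f2 = 0 := by
      apply fB_nondeg_left (q := q) (by omega) hA
      intro y
      have : f (T y) = 0 := hf ⟨y, rfl⟩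
      have h2 : f (fB q A f1 y, fB q A f2 y) = 0 := this
      rw [hfe] at h2
      rw [fB_add_left hp hchar hq, fB_smul_left, fB_smul_left, hα, hβ]
      linear_combination h2
    have := LinearIndependent.pair_iff.1 hli α β h0
    apply hf0
    apply LinearMap.ext
    rintro ⟨u, v⟩
    rw [hfe, ← hα, ← hβ, this.1, this.2, zero_pow (by omega)]
    simp
  have : (a, b) ∈ LinearMap.range T := hT ▸ Submodule.mem_top
  obtain ⟨y, hy⟩ := this
  exact ⟨y, congrArg Prod.fst hy, congrArg Prod.snd hy⟩

/-- Existence of a good frame adapted to an isotropic line. -/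
lemma exists_frame_s1 [IsAlgClosed k] (hp : p.Prime) (hchar : CharP k p) (hq : q = p ^ e)
    (hq2 : 2 ≤ q) (hA : IsUnit A) (L : Submodule k (Fin 4 → k)) (hL : finrank k L = 2)
    (hiso : ∀ x ∈ L, ∀ y ∈ L, fB q A x y = 0) :
    ∃ e1 e2 e3 e4 : Fin 4 → k, L = Submodule.span k {e1, e2} ∧
      Frame q A e1 e2 e3 e4 ∧ fB q A e4 e2 ≠ 0 := by
  let b := finBasisOfFinrankEq k L hL
  obtain ⟨f1, hf1⟩ : ∃ f : Fin 4 → k, f = b 0 := ⟨_, rfl⟩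
  obtain ⟨f2, hf2⟩ : ∃ f : Fin 4 → k, f = b 1 := ⟨_, rfl⟩
  have m1 : f1 ∈ L := hf1 ▸ (b 0).2
  have m2 : f2 ∈ L := hf2 ▸ (b 1).2
  have hli : LinearIndependent k ![f1, f2] := by
    have := b.linearIndependent.map' L.subtype (Submodule.ker_subtype L)
    have h2 : ![f1, f2] = L.subtype ∘ b := by
      funext i
      fin_cases i <;> simp [hf1, hf2]
    rw [h2]
    exact this
  obtain ⟨f3, h13, h23⟩ := exists_dual hp hchar hq hq2 hA f1 f2 hli 0 (-1)
  obtain ⟨f4, h14, h24⟩ := exists_dual hp hchar hq hq2 hA f1 f2 hli 1 0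
  have F : Frame q A f1 f2 f3 f4 := ⟨hli, hiso _ m1 _ m1, hiso _ m1 _ m2, hiso _ m2 _ m1,
    hiso _ m2 _ m2, h13, h23, h14, h24⟩
  have hdet := F.det_ne hp hchar hq hq2 hA
  obtain ⟨r, hr⟩ : ∃ r : k, r ^ (q * q + 1) * fB q A f3 f1 + r ^ (q * q) * fB q A f3 f2
      + r * fB q A f4 f1 + fB q A f4 f2 ≠ 0 := by
    by_contra! hcon
    open Polynomial in
    have hz : (X ^ (q * q + 1) * C (fB q A f3 f1) + X ^ (q * q) * C (fB q A f3 f2)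
      + X * C (fB q A f4 f1) + C (fB q A f4 f2) : k[X]) = 0 := by
      apply Polynomial.funext
      intro t
      have := hcon t
      simp only [Polynomial.eval_add, Polynomial.eval_mul, Polynomial.eval_C, Polynomial.eval_X,
        Polynomial.eval_pow, Polynomial.eval_zero]
      exact this
    have hqq : 4 ≤ q * q := by nlinarith
    have c0 := congrArg (fun f => Polynomial.coeff f 0) hz
    have c1 := congrArg (fun f => Polynomial.coeff f 1) hz
    have n1 : q * q ≠ 0 := by omega
    have n2 : q * q ≠ 1 := by omega
    have n3 : q ≠ 0 := by omega
    simp only [Polynomial.coeff_add, Polynomial.coeff_mul_C, Polynomial.coeff_X_pow,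
      Polynomial.coeff_X, Polynomial.coeff_C, Polynomial.coeff_zero, n2.symm, n1.symm] at c0 c1
    simp [n3] at c0 c1
    rw [c0, c1] at hdet
    simp at hdet
  have hli2 : LinearIndependent k ![f1, r • f1 + f2] := by
    rw [LinearIndependent.pair_iff]
    intro s t hst
    have := LinearIndependent.pair_iff.1 hli (s + t * r) t (by rw [← hst]; module)
    refine ⟨?_, this.2⟩
    have h1 := this.1
    rw [this.2] at h1
    simpa using h1
  have m3 : r • f1 + f2 ∈ L := L.add_mem (L.smul_mem _ m1) m2
  refine ⟨f1, r • f1 + f2, f3, f4 + r ^ q • f3, ?_, ⟨hli2, hiso _ m1 _ m1, hiso _ m1 _ m3,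
    hiso _ m3 _ m1, hiso _ m3 _ m3, h13, ?_, ?_, ?_⟩, ?_⟩
  · symm
    apply Submodule.eq_of_le_of_finrank_eq
    · rw [Submodule.span_le]
      rintro x (rfl | rfl)
      exacts [m1, m3]
    · rw [hL]
      exact finrank_pair_s1 hli2
  · simp only [fB_add_left hp hchar hq, fB_smul_left, fB_add_right, fB_smul_right, h13, h23]
    ring
  · simp only [fB_add_right, fB_smul_right, h13, h14]
    ring
  · simp only [fB_add_left hp hchar hq, fB_smul_left, fB_add_right, fB_smul_right, h13, h23, h14,
      h24]
    ring
  · convert hr using 1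
    simp only [fB_add_left hp hchar hq, fB_smul_left, fB_add_right, fB_smul_right]
    ring

lemma card_roots_sep [IsAlgClosed k] [DecidableEq k] (P : Polynomial k)
    (h : ∀ t, P.eval t = 0 → P.derivative.eval t ≠ 0) :
    P.roots.toFinset.card = P.natDegree := by
  have hs : P.Separable := by
    rw [Polynomial.Separable, Polynomial.isCoprime_iff_aeval_ne_zero_of_isAlgClosed k k]
    intro a
    by_cases ha : P.eval a = 0
    · exact Or.inr (by simpa using h a ha)
    · exact Or.inl (by simpa using ha)
  rw [Multiset.toFinset_card_of_nodup (Polynomial.nodup_roots hs),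
    IsAlgClosed.card_roots_eq_natDegree]

lemma card_roots_P [IsAlgClosed k] [DecidableEq k] (N : ℕ) (hN : 2 ≤ N) (hNk : (N : k) = 0)
    (c11 c12 c21 c22 : k) (h22 : c22 ≠ 0) (hdet : c11 * c22 - c12 * c21 ≠ 0) :
    (Polynomial.C c22 * Polynomial.X ^ (N + 1) + Polynomial.C c21 * Polynomial.X ^ N +
      Polynomial.C c12 * Polynomial.X + Polynomial.C c11 : Polynomial k).roots.toFinset.card
      = N + 1 := by
  rw [card_roots_sep]
  · compute_degree!
    · have : N ≠ 0 := by omega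
      have h2 : N + 1 ≠ 1 := by omega
      simp [this, h22]
  · intro t h1 h2
    simp [Polynomial.derivative_X_pow, hNk] at h1 h2
    apply hdet
    rw [pow_succ] at h1
    linear_combination c22 * h1 - (c22 * t + c21) * h2

lemma card_roots_Q [IsAlgClosed k] [DecidableEq k] (N : ℕ) (hN : 2 ≤ N) (hNk : (N : k) = 0)
    (a b : k) (ha : a ≠ 0) :
    (Polynomial.C (-1) * Polynomial.X ^ N + Polynomial.C a * Polynomial.X +
      Polynomial.C b : Polynomial k).roots.toFinset.card = N := by
  rw [card_roots_sep]
  · compute_degree!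
    all_goals first
      | omega
      | (have h0 : N ≠ 0 := by omega
         have h2 : N ≠ 1 := by omega
         simp [h0, h2, h2.symm])
  · intro t h1 h2
    simp [Polynomial.derivative_X_pow, hNk] at h1 h2
    exact ha h2

end

/-- Let `X` be a smooth extremal surface of degree `q+1` in
ℙ³(k) and let `L` be any line on `X`.  Then the set of lines `M` on `X` with
`M ≠ L` and `M` meeting `L` has cardinality exactly `q(q²+1)`. -/
theorem count_lines_meeting_a_line {k : Type*} [Field k] [IsAlgClosed k]
    (p e q : ℕ) (hp : p.Prime) (hchar : CharP k p) (he : 1 ≤ e) (hq : q = p ^ e)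
    (A : Matrix (Fin 4) (Fin 4) k) (hA : IsUnit A)
    (L : Submodule k (Fin 4 → k)) (hL : IsLineOn (extremalCone k q A) L) :
    {M : Submodule k (Fin 4 → k) |
        IsLineOn (extremalCone k q A) M ∧ M ≠ L ∧ MeetsLine M L}.ncard
      = q * (q ^ 2 + 1) := by
  classical
  have hp2 := hp.two_le
  have hq2 : 2 ≤ q := by
    rw [hq]
    calc 2 ≤ p := hp2
      _ = p ^ 1 := (pow_one p).symm
      _ ≤ p ^ e := Nat.pow_le_pow_right (by omega) he
  have hq0 : q ≠ 0 := by omega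
  have hqk : (q : k) = 0 := by
    rw [hq, Nat.cast_pow, CharP.cast_eq_zero, zero_pow (by omega)]
  have hInf : Infinite k := IsAlgClosed.instInfinite
  have hiso : ∀ M : Submodule k (Fin 4 → k), (M : Set (Fin 4 → k)) ⊆ extremalCone k q A →
      ∀ x ∈ M, ∀ y ∈ M, fB q A x y = 0 := by
    intro M hM x hx y hy
    exact (fB_isotropic hp hchar hq hq2 x y
      (fun t => hM (M.add_mem hx (M.smul_mem t hy))) (hM hy)).1
  obtain ⟨hL2, hLX⟩ := hL
  obtain ⟨e1, e2, e3, e4, rfl, F, h42⟩ := exists_frame_s1 hp hchar hq hq2 hA L hL2 (hiso L hLX)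
  have hdet := F.det_ne hp hchar hq hq2 hA
  obtain ⟨c11, hc11⟩ : ∃ c, c = fB q A e3 e1 := ⟨_, rfl⟩
  obtain ⟨c12, hc12⟩ : ∃ c, c = fB q A e3 e2 := ⟨_, rfl⟩
  obtain ⟨c21, hc21⟩ : ∃ c, c = fB q A e4 e1 := ⟨_, rfl⟩
  obtain ⟨c22, hc22⟩ : ∃ c, c = fB q A e4 e2 := ⟨_, rfl⟩
  rw [← hc11, ← hc12, ← hc21, ← hc22] at hdet
  rw [← hc22] at h42
  let P : Polynomial k := Polynomial.C c22 * Polynomial.X ^ (q * q + 1) +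
    Polynomial.C c21 * Polynomial.X ^ (q * q) +
      Polynomial.C c12 * Polynomial.X + Polynomial.C c11
  let Q : k → Polynomial k := fun t => Polynomial.C (-1) * Polynomial.X ^ q +
    Polynomial.C (c12 + t ^ (q * q) * c22) * Polynomial.X +
      Polynomial.C (fB q A (e3 + t ^ q • e4) (e3 + t ^ q • e4))
  let v : k → (Fin 4 → k) := fun t => e1 + t • e2
  let w : k → k → (Fin 4 → k) := fun t s => e3 + t ^ q • e4 + s • e2
  have hPe : ∀ t s, P.eval t = fB q A (w t s) (v t) := by
    intro t s
    simp only [P, v, w, fB_add_left hp hchar hq, fB_smul_left, fB_add_right, fB_smul_right,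
      F.h21, F.h22, ← hc11, ← hc12, ← hc21, ← hc22, Polynomial.eval_add, Polynomial.eval_mul,
      Polynomial.eval_C, Polynomial.eval_X, Polynomial.eval_pow]
    ring
  have hQe : ∀ t s, (Q t).eval s = fB q A (w t s) (w t s) := by
    intro t s
    simp only [Q, w, fB_add_left hp hchar hq, fB_smul_left, fB_add_right, fB_smul_right,
      F.h21, F.h22, F.h23, F.h24, ← hc11, ← hc12, ← hc21, ← hc22, Polynomial.eval_add,
      Polynomial.eval_mul, Polynomial.eval_C, Polynomial.eval_X, Polynomial.eval_pow]
    ring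
  have hvv : ∀ t, fB q A (v t) (v t) = 0 := by
    intro t
    simp only [v, fB_add_left hp hchar hq, fB_smul_left, fB_add_right, fB_smul_right,
      F.h11, F.h12, F.h21, F.h22]
    ring
  have hvw : ∀ t s, fB q A (v t) (w t s) = 0 := by
    intro t s
    simp only [v, w, fB_add_left hp hchar hq, fB_smul_left, fB_add_right, fB_smul_right,
      F.h11, F.h12, F.h21, F.h22, F.h13, F.h14, F.h23, F.h24]
    ring
  have hP0 : P ≠ 0 := by
    intro h0
    have := card_roots_P (q * q) (by nlinarith) (by simp [hqk]) c11 c12 c21 c22 h42 hdet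
    change P.roots.toFinset.card = _ at this
    simp [h0] at this
  have hQ0 : ∀ t, Q t ≠ 0 := by
    intro t h0
    have := congrArg (fun f => Polynomial.coeff f q) h0
    have h1 : q ≠ 1 := by omega
    simp only [Q, Polynomial.coeff_add, Polynomial.coeff_C_mul, Polynomial.coeff_X_pow,
      Polynomial.coeff_X, Polynomial.coeff_C, Polynomial.coeff_zero] at this
    simp [hq0, h1.symm] at this
  have hPd : ∀ t, P.eval t = 0 → c12 + t ^ (q * q) * c22 ≠ 0 := by
    intro t h1 h2
    simp only [P, Polynomial.eval_add, Polynomial.eval_mul,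
      Polynomial.eval_C, Polynomial.eval_X, Polynomial.eval_pow] at h1
    apply hdet
    rw [pow_succ] at h1
    linear_combination c22 * h1 - (c22 * t + c21) * h2
  have hLI : ∀ t s, LinearIndependent k ![v t, w t s] := by
    intro t s
    rw [LinearIndependent.pair_iff]
    intro a b hab
    have := F.coeff_zero a (a * t + b * s) b (b * t ^ q) (by
      rw [← hab]; simp only [v, w]; module)
    exact ⟨this.1, this.2.2.1⟩
  let G : (_ : k) × k → Submodule k (Fin 4 → k) := fun z => Submodule.span k {v z.1, w z.1 z.2}
  let S : Finset ((_ : k) × k) := P.roots.toFinset.sigma fun t => (Q t).roots.toFinset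
  have hS : ∀ t s, (⟨t, s⟩ : (_ : k) × k) ∈ S ↔ P.eval t = 0 ∧ (Q t).eval s = 0 := by
    intro t s
    simp only [S, Finset.mem_sigma, Multiset.mem_toFinset, Polynomial.mem_roots hP0,
      Polynomial.mem_roots (hQ0 t), Polynomial.IsRoot.def]
  have hset : {M : Submodule k (Fin 4 → k) |
        IsLineOn (extremalCone k q A) M ∧ M ≠ Submodule.span k {e1, e2} ∧
          MeetsLine M (Submodule.span k {e1, e2})} = G '' (S : Set ((_ : k) × k)) := by
    ext M
    simp only [Set.mem_ofPred_eq, Set.mem_image, Finset.mem_coe]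
    constructor
    · rintro ⟨⟨hM2, hMX⟩, hne, hmeet⟩
      have hMi := hiso M hMX
      obtain ⟨x, hx, hx0⟩ := (Submodule.ne_bot_iff _).1 hmeet
      obtain ⟨hxM, hxL⟩ := Submodule.mem_inf.1 hx
      obtain ⟨a, b, rfl⟩ := Submodule.mem_span_pair.1 hxL
      have hnle : ¬ M ≤ Submodule.span k {e1, e2} := by
        intro hle
        exact hne (Submodule.eq_of_le_of_finrank_eq hle (hM2.trans hL2.symm))
      obtain ⟨y, hyM, hyL⟩ := SetLike.not_le_iff_exists.1 hnle
      obtain ⟨y1, y2, y3, y4, rfl⟩ := F.span y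
      have hy34 : ¬ (y3 = 0 ∧ y4 = 0) := by
        rintro ⟨rfl, rfl⟩
        exact hyL (Submodule.mem_span_pair.2 ⟨y1, y2, by simp⟩)
      have r1 := hMi _ hxM _ hyM
      have r2 := hMi _ hyM _ hxM
      simp only [fB_add_left hp hchar hq, fB_smul_left, fB_add_right, fB_smul_right,
        F.h11, F.h12, F.h21, F.h22, F.h13, F.h14, F.h23, F.h24, ← hc11, ← hc12, ← hc21,
        ← hc22] at r1 r2
      have ha : a ≠ 0 := by
        rintro rfl
        have hb : b ≠ 0 := by
          rintro rfl
          simp at hx0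
        have h3 : y3 = 0 := by
          simpa [hq0, hb] using r1
        subst h3
        have h4 : y4 = 0 := by
          simpa [hq0, hb, h42] using r2
        exact hy34 ⟨rfl, h4⟩
      obtain ⟨t, rfl⟩ : ∃ t, b = a * t := ⟨b / a, by field_simp⟩
      have hvM : v t ∈ M := by
        have := M.smul_mem a⁻¹ hxM
        convert this using 1
        simp only [v, smul_add, smul_smul, ← mul_assoc, inv_mul_cancel₀ ha, one_smul, one_mul]
      have h4 : y4 = t ^ q * y3 := by
        have haq : a ^ q ≠ 0 := pow_ne_zero _ ha
        apply mul_left_cancel₀ haq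
        rw [mul_pow] at r1
        linear_combination r1
      subst h4
      have h3 : y3 ≠ 0 := by
        rintro rfl
        exact hy34 ⟨rfl, by simp⟩
      have hwM : w t (y3⁻¹ * (y2 - y1 * t)) ∈ M := by
        have := M.smul_mem y3⁻¹ (M.sub_mem hyM (M.smul_mem y1 hvM))
        convert this using 1
        have e : y1 • e1 + y2 • e2 + y3 • e3 + (t ^ q * y3) • e4 - y1 • v t
            = y3 • (e3 + t ^ q • e4) + (y2 - y1 * t) • e2 := by
          simp only [v]; module
        rw [e, smul_add, smul_smul, smul_smul, inv_mul_cancel₀ h3, one_smul]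
      refine ⟨⟨t, y3⁻¹ * (y2 - y1 * t)⟩, (hS _ _).2 ⟨?_, ?_⟩, ?_⟩
      · rw [hPe t (y3⁻¹ * (y2 - y1 * t))]
        exact hMi _ hwM _ hvM
      · rw [hQe]
        exact hMi _ hwM _ hwM
      · apply Submodule.eq_of_le_of_finrank_eq
        · rw [Submodule.span_le]
          rintro x (rfl | rfl)
          exacts [hvM, hwM]
        · exact (finrank_pair_s1 (hLI _ _)).trans hM2.symm
    · rintro ⟨⟨t, s⟩, hts, rfl⟩
      obtain ⟨h1, h2⟩ := (hS t s).1 hts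
      rw [hPe t s] at h1
      rw [hQe] at h2
      refine ⟨⟨finrank_pair_s1 (hLI t s), ?_⟩, ?_, ?_⟩
      · intro x hx
        obtain ⟨a, b, rfl⟩ := Submodule.mem_span_pair.1 hx
        change fB q A (a • v t + b • w t s) (a • v t + b • w t s) = 0
        simp only [fB_add_left hp hchar hq, fB_smul_left, fB_add_right, fB_smul_right, h1, h2,
          hvv, hvw]
        ring
      · intro heq
        have hw : w t s ∈ Submodule.span k {e1, e2} := by
          rw [← heq]
          exact Submodule.subset_span (by simp)
        obtain ⟨a, b, hab⟩ := Submodule.mem_span_pair.1 hw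
        have := F.coeff_zero a (b - s) (-1) (- t ^ q) (by
          have h0 : a • e1 + b • e2 - w t s = 0 := by rw [hab, sub_self]
          rw [← h0]; simp only [w]; module)
        exact one_ne_zero (neg_eq_zero.1 this.2.2.1)
      · apply (Submodule.ne_bot_iff _).2
        refine ⟨v t, Submodule.mem_inf.2 ⟨Submodule.subset_span (by simp),
          Submodule.mem_span_pair.2 ⟨1, t, by simp [v]⟩⟩, ?_⟩
        exact (hLI t s).ne_zero 0
  have hinj : Function.Injective G := by
    rintro ⟨t, s⟩ ⟨t', s'⟩ h
    have h1 : v t' ∈ G ⟨t, s⟩ := by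
      rw [h]; exact Submodule.subset_span (by simp)
    have h2 : w t' s' ∈ G ⟨t, s⟩ := by
      rw [h]; exact Submodule.subset_span (by simp)
    obtain ⟨a, b, hab⟩ := Submodule.mem_span_pair.1 h1
    obtain ⟨a', b', hab'⟩ := Submodule.mem_span_pair.1 h2
    simp only at hab hab'
    have k1 := F.coeff_zero (a - 1) (a * t + b * s - t') b (b * t ^ q) (by
      have h0 := sub_eq_zero.2 hab
      rw [← h0]; simp only [v, w]; module)
    have k2 := F.coeff_zero a' (a' * t + b' * s - s') (b' - 1) (b' * t ^ q - t' ^ q) (by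
      have h0 := sub_eq_zero.2 hab'
      rw [← h0]; simp only [v, w]; module)
    obtain ⟨ka, kb, kc, -⟩ := k1
    obtain ⟨la, lb, lc, -⟩ := k2
    have et : t = t' := by
      linear_combination kb - t * ka - s * kc
    have es : s = s' := by
      linear_combination lb - t * la - s * lc
    rw [et, es]
  rw [hset, Set.ncard_image_of_injective _ hinj, Set.ncard_coe_finset, Finset.card_sigma]
  rw [Finset.sum_congr rfl (g := fun _ => q)]
  · rw [Finset.sum_const, smul_eq_mul]
    have := card_roots_P (q * q) (by nlinarith) (by simp [hqk]) c11 c12 c21 c22 h42 hdet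
    change P.roots.toFinset.card = _ at this
    rw [this]
    ring
  · intro t ht
    rw [Multiset.mem_toFinset, Polynomial.mem_roots hP0] at ht
    exact card_roots_Q q hq2 hqk _ _ (hPd t ht)
end

section
/- Let X be a smooth extremal surface of degree q+1 in ℙ³(k) and let L be any line on X. Then the set of lines on X that are skew to L has cardinality exactly q⁴. -/
open Module

open Polynomial in
/-- The recursive coefficient polynomials of a fixed vector. -/
noncomputable def coefPoly {k : Type*} [Field k] (q : ℕ) (a : ℕ → k) : ℕ → k[X]
  | 0 => C (a 0) * X ^ q
  | (i+1) => coefPoly q a i ^ q + C (a (i+1)) * X ^ q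

open Polynomial in
lemma coefPoly_natDegree {k : Type*} [Field k] (q : ℕ) (hq : 2 ≤ q) (a : ℕ → k) (ha : a 0 ≠ 0)
    (i : ℕ) : (coefPoly q a i).natDegree = q ^ (i+1) := by
  induction i with
  | zero => simp [coefPoly, natDegree_C_mul_X_pow _ _ ha]
  | succ i ih =>
    have h1 : (coefPoly q a i ^ q).natDegree = q ^ (i+1+1) := by
      rw [natDegree_pow, ih]; ring
    rw [coefPoly, natDegree_add_eq_left_of_natDegree_lt, h1]
    rw [h1]
    refine (natDegree_C_mul_X_pow_le _ _).trans_lt ?_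
    calc q = q ^ 1 := (pow_one q).symm
      _ < _ := Nat.pow_lt_pow_right (by omega) (by omega)

open Polynomial in
lemma coefPoly_dvd {k : Type*} [Field k] (q : ℕ) (hq : 2 ≤ q) (a : ℕ → k)
    (i : ℕ) : X ^ 2 ∣ coefPoly q a i := by
  induction i with
  | zero => exact Dvd.dvd.mul_left (pow_dvd_pow _ hq) _
  | succ i ih =>
    refine dvd_add (ih.trans (dvd_pow_self _ (by omega))) (Dvd.dvd.mul_left (pow_dvd_pow _ hq) _)

open Polynomial in
lemma exists_coefs {k : Type*} [Field k] [IsAlgClosed k] (q : ℕ) (hq : 2 ≤ q) (a : ℕ → k)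
    (ha : a 0 ≠ 0) (n : ℕ) : ∃ c : ℕ → k, c n ≠ 0 ∧ c 0 = a 0 * c n ^ q ∧
      ∀ i, c (i+1) = c i ^ q + a (i+1) * c n ^ q := by
  obtain ⟨g, hg⟩ := coefPoly_dvd q hq a n
  have hd := coefPoly_natDegree q hq a ha n
  have hg0 : g ≠ 0 := by
    rintro rfl
    rw [hg, mul_zero, natDegree_zero] at hd
    have : 0 < q ^ (n+1) := Nat.pow_pos (by omega)
    omega
  have hdeg : (X * g - 1).degree ≠ 0 := by
    have h1 : (X * g).natDegree = 1 + g.natDegree := by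
      rw [natDegree_mul X_ne_zero hg0, natDegree_X]
    have h2 : (X * g - 1).natDegree = 1 + g.natDegree := by
      rw [natDegree_sub_eq_left_of_natDegree_lt, h1]
      rw [h1]; simp
    intro h
    have : (X * g - 1).natDegree = 0 := natDegree_eq_zero_iff_degree_le_zero.2 h.le
    omega
  obtain ⟨t, ht⟩ := IsAlgClosed.exists_root _ hdeg
  have ht1 : t * g.eval t = 1 := by
    simpa [IsRoot, sub_eq_zero] using ht
  have ht0 : t ≠ 0 := by rintro rfl; simp at ht1
  have hcn : (coefPoly q a n).eval t = t := by
    rw [hg]; simp only [eval_mul, eval_pow, eval_X]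
    rw [pow_two, mul_assoc, ht1, mul_one]
  refine ⟨fun i => (coefPoly q a i).eval t, ?_, ?_, ?_⟩
  · simpa [hcn] using ht0
  · simp [hcn, coefPoly]
  · intro i
    simp [hcn, coefPoly]

/-- Fixed vector of an injective `q`-semilinear endomorphism. -/
lemma exists_fixed {k : Type*} [Field k] [IsAlgClosed k] (q : ℕ) (hq : 2 ≤ q) (σ : k →+* k)
    (hσ : ∀ x, σ x = x ^ q) {V : Type*} [AddCommGroup V] [Module k V] [FiniteDimensional k V]
    [Nontrivial V] (F : V →ₛₗ[σ] V) (hF : Function.Injective F) :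
    ∃ w : V, w ≠ 0 ∧ F w = w := by
  obtain ⟨v, hv⟩ := exists_ne (0 : V)
  set u : ℕ → V := fun i => F^[i] v with hu
  have hus : ∀ i, F (u i) = u (i+1) := fun i => by
    simp only [hu, Function.iterate_succ_apply']
  have key : ∃ m, ∃ a : ℕ → k, u m = ∑ i ∈ Finset.range m, a i • u i := by
    by_contra! hcon
    have hli : ∀ m, LinearIndependent k (fun i : Fin m => u i) := by
      intro m
      induction m with
      | zero => exact linearIndependent_empty_type
      | succ m ih =>
        rw [linearIndependent_finSucc']
        refine ⟨ih, fun hmem => ?_⟩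
        obtain ⟨c, hc⟩ := (Submodule.mem_span_range_iff_exists_fun k).1 hmem
        refine hcon m (fun i => if h : i < m then c ⟨i, h⟩ else 0) ?_
        rw [Finset.sum_range]
        simpa [Fin.init] using hc.symm
    have := (hli (finrank k V + 1)).fintype_card_le_finrank
    simp at this
  classical
  obtain ⟨a, ha⟩ := Nat.find_spec key
  have hmin := fun m (h : m < Nat.find key) => Nat.find_min key h
  generalize Nat.find key = m at ha hmin
  rcases m with _ | n
  · simp [hu] at ha; exact absurd ha hv
  have ha0 : a 0 ≠ 0 := by
    intro h0
    refine hmin n (Nat.lt_succ_self n) ?_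
    choose b hb using fun i => IsAlgClosed.exists_pow_nat_eq (a (i+1)) (n := q) (by omega)
    refine ⟨b, hF ?_⟩
    rw [hus, ha, Finset.sum_range_succ', h0, zero_smul, add_zero, map_sum]
    refine Finset.sum_congr rfl fun i _ => ?_
    rw [LinearMap.map_smulₛₗ, hσ, hb, hus]
  obtain ⟨c, hcn, hc0, hcs⟩ := exists_coefs q hq a ha0 n
  refine ⟨∑ i ∈ Finset.range (n+1), c i • u i, ?_, ?_⟩
  · intro h
    rw [Finset.sum_range_succ] at h
    refine hmin n (Nat.lt_succ_self n) ⟨fun i => -(c n)⁻¹ * c i, ?_⟩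
    simp only [mul_smul, ← Finset.smul_sum]
    rw [eq_neg_of_add_eq_zero_left h, smul_neg, neg_smul, neg_neg, smul_smul,
      inv_mul_cancel₀ hcn, one_smul]
  · rw [map_sum]
    simp only [LinearMap.map_smulₛₗ, hσ, hus]
    rw [Finset.sum_range_succ, ha, Finset.smul_sum, Finset.sum_range_succ', Finset.sum_range_succ' (fun i => c i • u i), ← add_assoc,
      ← Finset.sum_add_distrib, hc0]
    congr 1
    · refine Finset.sum_congr rfl fun i _ => ?_
      rw [hcs, add_smul, smul_smul, mul_comm (c n ^ q)]
    · rw [smul_smul, mul_comm]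

lemma card_fixed_one {k : Type*} [Field k] [IsAlgClosed k] (p e q : ℕ) (hp : p.Prime)
    (hchar : CharP k p) (he : 1 ≤ e) (hq : q = p ^ e) :
    Nat.card {x : k // x ^ q - x = 0} = q := by
  classical
  have hq2 : 2 ≤ q := hq ▸ hp.two_le.trans (Nat.le_self_pow (by omega) p)
  have hq0 : (q : k) = 0 := by
    rw [hq]; push_cast; rw [CharP.cast_eq_zero, zero_pow (by omega)]
  open Polynomial in
  have hne : (X ^ q - X : k[X]) ≠ 0 := FiniteField.X_pow_card_sub_X_ne_zero k hq2
  open Polynomial in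
  have hsep : (X ^ q - X : k[X]).Separable := by
    have hd : derivative (X ^ q - X : k[X]) = -1 := by
      rw [derivative_sub, derivative_X_pow, hq0, C_0, zero_mul, derivative_X, zero_sub]
    rw [separable_def, hd]
    exact isCoprime_one_right.neg_right
  open Polynomial in
  have hc := card_rootSet_eq_natDegree (K := k) hsep (IsAlgClosed.splits _)
  rw [FiniteField.X_pow_card_sub_X_natDegree_eq k hq2] at hc
  rw [← Nat.card_eq_fintype_card] at hc
  refine Eq.trans ?_ hc
  refine Nat.card_congr (Equiv.subtypeEquivRight fun x => ?_)
  rw [Polynomial.mem_rootSet]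
  simp [hne]

/-- `F - id` is surjective with kernel of cardinality `q ^ n`. -/
lemma lang {k : Type*} [Field k] [IsAlgClosed k] (p e q : ℕ) (hp : p.Prime)
    (hchar : CharP k p) (he : 1 ≤ e) (hq : q = p ^ e) (σ : k →+* k)
    (hσ : ∀ x, σ x = x ^ q) (n : ℕ) : ∀ {V : Type*} [AddCommGroup V] [Module k V]
    [FiniteDimensional k V] (F : V →ₛₗ[σ] V) (_ : Function.Injective F) (_ : finrank k V = n),
    (∀ r, ∃ v, F v - v = r) ∧ Nat.card {v // F v - v = 0} = q ^ n := by
  have hq2 : 2 ≤ q := hq ▸ hp.two_le.trans (Nat.le_self_pow (by omega) p)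
  induction n with
  | zero =>
    intro V _ _ _ F hF hn
    have := Module.finrank_zero_iff.1 hn
    refine ⟨fun r => ⟨0, Subsingleton.elim _ _⟩, ?_⟩
    rw [pow_zero, Nat.card_eq_one_iff_unique]
    exact ⟨inferInstance, ⟨0, Subsingleton.elim _ _⟩⟩
  | succ n ih =>
    intro V _ _ _ F hF hn
    have : Nontrivial V := Module.nontrivial_of_finrank_pos (R := k) (by omega)
    obtain ⟨w, hw0, hw⟩ := exists_fixed q hq2 σ hσ F hF
    set W := Submodule.span k {w} with hW
    have hle : W ≤ W.comap F := by
      rw [hW, Submodule.span_le]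
      rintro _ rfl
      simp [hw, Submodule.mem_span_singleton_self]
    set G := W.mapQ W F hle with hGdef
    have hGmk : ∀ v, G (W.mkQ v) = W.mkQ (F v) := fun v => rfl
    have hmem : ∀ v, W.mkQ v = 0 ↔ ∃ c : k, c • w = v := by
      intro v
      rw [Submodule.mkQ_apply, Submodule.Quotient.mk_eq_zero, hW, Submodule.mem_span_singleton]
    have hFc : ∀ c : k, F (c • w) = c ^ q • w := fun c => by
      rw [LinearMap.map_smulₛₗ, hσ, hw]
    have hG : Function.Injective G := by
      rw [injective_iff_map_eq_zero]
      intro x hx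
      obtain ⟨v, rfl⟩ := W.mkQ_surjective x
      rw [hGmk, hmem] at hx
      obtain ⟨c, hc⟩ := hx
      obtain ⟨b, hb⟩ := IsAlgClosed.exists_pow_nat_eq c (n := q) (by omega)
      rw [hmem]
      exact ⟨b, hF (by rw [hFc, hb, hc])⟩
    have hfr : finrank k (V ⧸ W) = n := by
      have := W.finrank_quotient_add_finrank
      have h1 : finrank k W = 1 := finrank_span_singleton hw0
      omega
    obtain ⟨hs, hc⟩ := ih G hG hfr
    have hsol : ∀ d : k, ∃ c : k, c ^ q - c = d := by
      intro d
      open Polynomial in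
      have hdeg : (X ^ q - X - C d : k[X]).degree ≠ 0 := by
        intro h
        have h1 : (X ^ q - X - C d : k[X]).natDegree = 0 :=
          natDegree_eq_zero_iff_degree_le_zero.2 h.le
        rw [natDegree_sub_C, FiniteField.X_pow_card_sub_X_natDegree_eq k hq2] at h1
        omega
      obtain ⟨c, hc⟩ := IsAlgClosed.exists_root _ hdeg
      exact ⟨c, by simpa [Polynomial.IsRoot, sub_eq_zero] using hc⟩
    have hlift : ∀ (r : V) (x : V ⧸ W), G x - x = W.mkQ r → ∃ v, W.mkQ v = x ∧ F v - v = r := by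
      intro r x hx
      obtain ⟨v, rfl⟩ := W.mkQ_surjective x
      have : W.mkQ (r - (F v - v)) = 0 := by
        rw [map_sub, map_sub, ← hGmk, hx, sub_self]
      obtain ⟨d, hd⟩ := (hmem _).1 this
      obtain ⟨c, hc⟩ := hsol d
      refine ⟨v + c • w, ?_, ?_⟩
      · rw [map_add, (hmem (c • w)).2 ⟨c, rfl⟩, add_zero]
      · rw [map_add, hFc]
        have : r = (F v - v) + d • w := by rw [hd]; abel
        rw [this, ← hc, sub_smul]; abel
    refine ⟨fun r => ?_, ?_⟩
    · obtain ⟨x, hx⟩ := hs (W.mkQ r)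
      obtain ⟨v, -, hv⟩ := hlift r x hx
      exact ⟨v, hv⟩
    · have hl : ∀ x : {x // G x - x = 0}, ∃ v, W.mkQ v = x.1 ∧ F v - v = 0 := fun x =>
        hlift 0 x.1 (by rw [x.2, map_zero])
      choose s hs1 hs2 using hl
      have hbij : Function.Bijective
          (fun y : {x // G x - x = 0} × {x : k // x ^ q - x = 0} =>
            (⟨s y.1 + y.2.1 • w, by
              have h1 := hs2 y.1
              have h2 := y.2.2
              rw [map_add, hFc, sub_eq_zero.1 h1, sub_eq_zero.1 h2, sub_self]⟩ :
              {v // F v - v = 0})) := by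
        constructor
        · rintro ⟨x, c⟩ ⟨x', c'⟩ h
          simp only [Subtype.mk.injEq] at h
          have hx : x = x' := by
            have := congrArg W.mkQ h
            rw [map_add, map_add, (hmem (c.1 • w)).2 ⟨_, rfl⟩, (hmem (c'.1 • w)).2 ⟨_, rfl⟩,
              add_zero, add_zero, hs1, hs1] at this
            exact Subtype.ext this
          subst hx
          have := smul_left_injective k hw0 (add_left_cancel h)
          rw [Subtype.ext this]
        · rintro ⟨v, hv⟩
          let x : {x // G x - x = 0} := ⟨W.mkQ v, by
            rw [hGmk, ← map_sub, hv, map_zero]⟩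
          have : W.mkQ (v - s x) = 0 := by rw [map_sub, hs1, sub_self]
          obtain ⟨c, hc⟩ := (hmem _).1 this
          refine ⟨⟨x, ⟨c, ?_⟩⟩, ?_⟩
          · refine smul_left_injective k hw0 ?_
            simp only [zero_smul, sub_smul]
            rw [← hFc, hc, map_sub, sub_eq_zero.1 hv, sub_eq_zero.1 (hs2 x), sub_self]
          · simp only [Subtype.mk.injEq]
            rw [hc]; abel
      rw [← Nat.card_congr (Equiv.ofBijective _ hbij), Nat.card_prod, hc,
        card_fixed_one p e q hp hchar he hq, pow_succ]

lemma card_sol {k : Type*} [Field k] [IsAlgClosed k] (p e q : ℕ) (hp : p.Prime)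
    (hchar : CharP k p) (he : 1 ≤ e) (hq : q = p ^ e) (σ : k →+* k)
    (hσ : ∀ x, σ x = x ^ q) {V W : Type*} [AddCommGroup V] [Module k V]
    [FiniteDimensional k V] [AddCommGroup W] [Module k W] (H : V ≃ₗ[k] W) (G : V →ₛₗ[σ] W)
    (hG : Function.Injective G) (r : W) :
    Nat.card {v // G v + H v + r = 0} = q ^ finrank k V := by
  let F : V →ₛₗ[σ] V := (-H.symm.toLinearMap).comp G
  have hFv : ∀ v, F v = - H.symm (G v) := fun v => rfl
  have hF : Function.Injective F := by
    intro x y h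
    rw [hFv, hFv, neg_inj] at h
    exact hG (H.symm.injective h)
  obtain ⟨hs, hc⟩ := lang p e q hp hchar he hq σ hσ _ F hF rfl
  rw [← hc]
  have hiff : ∀ v, G v + H v + r = 0 ↔ F v - v = H.symm r := by
    intro v
    rw [hFv, ← H.injective.eq_iff]
    simp only [map_sub, map_neg, LinearEquiv.apply_symm_apply]
    constructor
    · intro h; rw [eq_neg_of_add_eq_zero_right h]; abel
    · intro h; rw [← h]; abel
  obtain ⟨v0, hv0⟩ := hs (H.symm r)
  refine Nat.card_congr ((Equiv.subRight v0).subtypeEquiv fun v => ?_)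
  rw [hiff, Equiv.subRight_apply, map_sub, ← hv0, ← sub_eq_zero]
  constructor <;> intro h <;> rw [← h] <;> abel

/-- The `q`-sesquilinear form with matrix `A`. -/
def frobB {k : Type*} [Field k] (q : ℕ) (σ : k →+* k) (hσ : ∀ x, σ x = x ^ q)
    (A : Matrix (Fin 4) (Fin 4) k) :
    (Fin 4 → k) →ₛₗ[σ] (Fin 4 → k) →ₗ[k] k :=
  LinearMap.mk₂'ₛₗ σ (RingHom.id k) (fun x y => ∑ i, ∑ j, A i j * x i ^ q * y j)
    (by
      intro x x' y
      simp only [Pi.add_apply, ← hσ, map_add, mul_add, add_mul, Finset.sum_add_distrib])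
    (by
      intro c x y
      simp only [Pi.smul_apply, smul_eq_mul, ← hσ, map_mul, Finset.mul_sum]
      refine Finset.sum_congr rfl fun i _ => Finset.sum_congr rfl fun j _ => by ring)
    (by
      intro x y y'
      simp only [Pi.add_apply, mul_add, Finset.sum_add_distrib])
    (by
      intro c x y
      simp only [Pi.smul_apply, smul_eq_mul, RingHom.id_apply, Finset.mul_sum]
      refine Finset.sum_congr rfl fun i _ => Finset.sum_congr rfl fun j _ => by ring)

lemma frobB_apply {k : Type*} [Field k] (q : ℕ) (σ : k →+* k) (hσ : ∀ x, σ x = x ^ q)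
    (A : Matrix (Fin 4) (Fin 4) k) (x y : Fin 4 → k) :
    frobB q σ hσ A x y = ∑ i, ∑ j, A i j * x i ^ q * y j := rfl

lemma frobB_right {k : Type*} [Field k] (q : ℕ) (hq : 2 ≤ q) (σ : k →+* k)
    (hσ : ∀ x, σ x = x ^ q) (A : Matrix (Fin 4) (Fin 4) k) (hA : IsUnit A) (y : Fin 4 → k)
    (h : ∀ x, frobB q σ hσ A x y = 0) : y = 0 := by
  have h1 : A.mulVec y = 0 := by
    funext i
    have := h (Pi.single i 1)
    rw [frobB_apply, Finset.sum_eq_single i] at this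
    · simpa [Matrix.mulVec, dotProduct] using this
    · intro j _ hj
      simp [Pi.single_eq_of_ne hj, zero_pow (show q ≠ 0 by omega)]
    · simp
  exact Matrix.mulVec_injective_of_isUnit hA (by rw [h1, Matrix.mulVec_zero])

lemma frobB_left {k : Type*} [Field k] (q : ℕ) (hq : 2 ≤ q) (σ : k →+* k)
    (hσ : ∀ x, σ x = x ^ q) (A : Matrix (Fin 4) (Fin 4) k) (hA : IsUnit A) (x : Fin 4 → k)
    (h : ∀ y, frobB q σ hσ A x y = 0) : x = 0 := by
  have h1 : Matrix.vecMul (fun i => x i ^ q) A = 0 := by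
    funext j
    have := h (Pi.single j 1)
    rw [frobB_apply, Finset.sum_comm, Finset.sum_eq_single j] at this
    · simpa [Matrix.vecMul, dotProduct, mul_comm] using this
    · intro i _ hi
      simp [Pi.single_eq_of_ne hi]
    · simp
  have h2 : (fun i => x i ^ q) = 0 :=
    Matrix.vecMul_injective_of_isUnit hA (by
      show Matrix.vecMul (fun i => x i ^ q) A = Matrix.vecMul 0 A
      rw [h1, Matrix.zero_vecMul])
  funext i
  have h3 := congrFun h2 i
  exact pow_eq_zero_iff (show q ≠ 0 by omega) |>.1 h3

/-- Vanishing on the diagonal of a subspace implies total isotropy. -/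
lemma isotropic_s2 {k : Type*} [Field k] [IsAlgClosed k] (q : ℕ) (hq : 2 ≤ q) (σ : k →+* k)
    (hσ : ∀ x, σ x = x ^ q) {V : Type*} [AddCommGroup V] [Module k V]
    (B : V →ₛₗ[σ] V →ₗ[k] k) (M : Submodule k V)
    (h : ∀ x ∈ M, B x x = 0) : ∀ x ∈ M, ∀ y ∈ M, B x y = 0 := by
  intro x hx y hy
  have h1 : ∀ t : k, t * B x y + t ^ q * B y x = 0 := by
    intro t
    have := h (x + t • y) (M.add_mem hx (M.smul_mem t hy))
    simp only [map_add, LinearMap.add_apply, LinearMap.map_smulₛₗ, LinearMap.smul_apply,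
      h x hx, h y hy, hσ, smul_eq_mul, mul_zero, add_zero, zero_add, RingHom.id_apply] at this
    rw [add_comm]; exact this
  open Polynomial in
  have h2 : (C (B x y) * X + C (B y x) * X ^ q : k[X]) = 0 := by
    refine Polynomial.funext fun t => ?_
    have := h1 t
    simp only [eval_add, eval_mul, eval_C, eval_X, eval_pow, eval_zero]
    rw [← this]; ring
  have h3 := congrArg (fun f => Polynomial.coeff f 1) h2
  simpa [Polynomial.coeff_X_pow, show ¬ (1 = q) by omega] using h3

/-- Let `X` be a smooth extremal surface of degree `q+1` in
ℙ³(k) and let `L` be any line on `X`.  Then the set of lines on `X` that are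
skew to `L` has cardinality exactly `q⁴`. -/
theorem count_lines_skew_to_a_line {k : Type*} [Field k] [IsAlgClosed k]
    (p e q : ℕ) (hp : p.Prime) (hchar : CharP k p) (he : 1 ≤ e) (hq : q = p ^ e)
    (A : Matrix (Fin 4) (Fin 4) k) (hA : IsUnit A)
    (L : Submodule k (Fin 4 → k)) (hL : IsLineOn (extremalCone k q A) L) :
    {M : Submodule k (Fin 4 → k) |
        IsLineOn (extremalCone k q A) M ∧ SkewLine M L}.ncard = q ^ 4 := by
  have hq2 : 2 ≤ q := hq ▸ hp.two_le.trans (Nat.le_self_pow (by omega) p)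
  obtain ⟨σ, hσ⟩ : ∃ σ : k →+* k, ∀ x, σ x = x ^ q := by
    have := hchar
    have : ExpChar k p := ExpChar.prime hp
    exact ⟨iterateFrobenius k p e, fun x => by rw [iterateFrobenius_def, hq]⟩
  set B := frobB q σ hσ A with hB
  have hBr := frobB_right q hq2 σ hσ A hA
  have hBl := frobB_left q hq2 σ hσ A hA
  rw [← hB] at hBr hBl
  have hX : ∀ x, x ∈ extremalCone k q A ↔ B x x = 0 := fun x => Iff.rfl
  have hiso : ∀ M : Submodule k (Fin 4 → k), (M : Set (Fin 4 → k)) ⊆ extremalCone k q A ↔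
      ∀ x ∈ M, ∀ y ∈ M, B x y = 0 := fun M =>
    ⟨fun h => isotropic_s2 q hq2 σ hσ B M fun x hx => (hX x).1 (h hx), fun h x hx => h x hx x hx⟩
  obtain ⟨hL2, hLX⟩ := hL
  rw [hiso] at hLX
  have hL2 : finrank k L = 2 := hL2
  obtain ⟨N, hN⟩ := L.exists_isCompl
  have hN2 : finrank k N = 2 := by
    have := Submodule.finrank_add_eq_of_isCompl hN
    simp at this; omega
  let b : Basis (Fin 2) k N := finBasisOfFinrankEq k N hN2
  clear_value b
  have hdec : ∀ x : Fin 4 → k, ∃ l ∈ L, ∃ c : Fin 2 → k, x = l + ∑ i, c i • (b i : Fin 4 → k) := by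
    intro x
    obtain ⟨l, hl, n, hn, rfl⟩ := Submodule.mem_sup.1 (hN.sup_eq_top ▸ Submodule.mem_top (x := x))
    refine ⟨l, hl, fun i => b.repr ⟨n, hn⟩ i, ?_⟩
    have := congrArg Subtype.val (b.sum_repr ⟨n, hn⟩)
    simp only [Submodule.coe_sum, Submodule.coe_smul] at this
    rw [this]
  -- the linear and semilinear parts
  let H0 : (Fin 2 → L) →ₗ[k] (Fin 2 → Fin 2 → k) :=
    { toFun := fun z i j => B (b i) (z j)
      map_add' := fun z z' => by funext i j; simp
      map_smul' := fun c z => by funext i j; simp }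
  let G : (Fin 2 → L) →ₛₗ[σ] (Fin 2 → Fin 2 → k) :=
    { toFun := fun z i j => B (z i) (b j)
      map_add' := fun z z' => by funext i j; simp
      map_smul' := fun c z => by funext i j; simp }
  have hH0 : Function.Injective H0 := by
    rw [injective_iff_map_eq_zero]
    intro z hz
    funext j
    apply Subtype.ext
    refine hBr _ fun x => ?_
    obtain ⟨l, hl, c, rfl⟩ := hdec x
    have h1 : ∀ i, B (b i) (z j) = 0 := fun i => congrFun (congrFun hz i) j
    rw [map_add, map_sum]
    simp only [LinearMap.add_apply, LinearMap.sum_apply, LinearMap.map_smulₛₗ,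
      LinearMap.smul_apply, h1, hLX l hl _ (z j).2, smul_zero, Finset.sum_const_zero, add_zero]
  have hG : Function.Injective G := by
    rw [injective_iff_map_eq_zero]
    intro z hz
    funext j
    apply Subtype.ext
    refine hBl _ fun x => ?_
    obtain ⟨l, hl, c, rfl⟩ := hdec x
    have h1 : ∀ i, B (z j) (b i) = 0 := fun i => congrFun (congrFun hz j) i
    rw [map_add, map_sum]
    simp only [LinearMap.map_smul, h1, hLX _ (z j).2 l hl, smul_zero, Finset.sum_const_zero,
      add_zero]
  have hfr : finrank k (Fin 2 → L) = 4 := by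
    rw [Module.finrank_pi_fintype]; simp [hL2]
  have hfr' : finrank k (Fin 2 → Fin 2 → k) = 4 := by
    rw [Module.finrank_pi_fintype]; simp
  let H : (Fin 2 → L) ≃ₗ[k] (Fin 2 → Fin 2 → k) :=
    LinearEquiv.ofInjectiveOfFinrankEq H0 hH0 (by rw [hfr, hfr'])
  have hHz : ∀ z, H z = H0 z := fun z => rfl
  let R : Fin 2 → Fin 2 → k := fun i j => B (b i) (b j)
  have hcard := card_sol p e q hp hchar he hq σ hσ H G hG R
  rw [hfr] at hcard
  rw [← hcard, ← Nat.card_coe_set_eq]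
  symm
  -- the graph construction
  let v : (Fin 2 → L) → Fin 2 → (Fin 4 → k) := fun z i => (b i : Fin 4 → k) + z i
  have hv : ∀ z (c : Fin 2 → k), ∑ i, c i • v z i ∈ L → c = 0 := by
    intro z c h
    have h1 : ((∑ i, c i • b i : N) : Fin 4 → k) ∈ L := by
      have h2 : ((∑ i, c i • b i : N) : Fin 4 → k) =
          ∑ i, c i • v z i - ((∑ i, c i • z i : L) : Fin 4 → k) := by
        simp only [v, smul_add, Finset.sum_add_distrib, Submodule.coe_sum, Submodule.coe_smul]
        abel
      rw [h2]
      exact L.sub_mem h (Subtype.mem _)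
    have h3 : (∑ i, c i • b i : N) = 0 :=
      Subtype.ext ((Submodule.disjoint_def.1 hN.disjoint) _ h1 (Subtype.mem _))
    funext i
    exact Fintype.linearIndependent_iff.1 b.linearIndependent c h3 i
  have hli : ∀ z, LinearIndependent k (v z) := fun z => by
    rw [Fintype.linearIndependent_iff]
    intro c hc i
    exact congrFun (hv z c (by rw [hc]; exact L.zero_mem)) i
  have hsk : ∀ z, Submodule.span k (Set.range (v z)) ⊓ L = ⊥ := by
    intro z
    rw [Submodule.eq_bot_iff]
    rintro x ⟨hx, hxL⟩
    obtain ⟨c, rfl⟩ := (Submodule.mem_span_range_iff_exists_fun k).1 hx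
    rw [hv z c hxL]; simp
  have hf2 : ∀ z, finrank k (Submodule.span k (Set.range (v z))) = 2 := fun z => by
    rw [finrank_span_eq_card (hli z)]; simp
  have hBv : ∀ z i j, B (v z i) (v z j) = (G z + H z + R) i j := by
    intro z i j
    have : (G z + H z + R) i j = B (z i) (b j) + B (b i) (z j) + B (b i) (b j) := rfl
    rw [this]
    simp only [v, map_add, LinearMap.add_apply, hLX _ (z i).2 _ (z j).2]
    ring
  refine Nat.card_congr (Equiv.ofBijective
    (fun z => ⟨Submodule.span k (Set.range (v z.1)), ⟨hf2 _, ?_⟩, hsk _⟩) ⟨?_, ?_⟩)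
  · rw [hiso]
    intro x hx y hy
    obtain ⟨c, rfl⟩ := (Submodule.mem_span_range_iff_exists_fun k).1 hx
    obtain ⟨d, rfl⟩ := (Submodule.mem_span_range_iff_exists_fun k).1 hy
    have h0 : ∀ i j, B (v z.1 i) (v z.1 j) = 0 := fun i j => by rw [hBv, z.2]; rfl
    simp only [map_sum, LinearMap.sum_apply, LinearMap.map_smulₛₗ, LinearMap.smul_apply, h0,
      smul_zero, Finset.sum_const_zero]
  · rintro ⟨z, hz⟩ ⟨z', hz'⟩ h
    simp only [Subtype.mk.injEq] at h ⊢
    funext i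
    have h1 : v z i - v z' i ∈ Submodule.span k (Set.range (v z)) :=
      Submodule.sub_mem _ (Submodule.subset_span ⟨i, rfl⟩)
        (h ▸ Submodule.subset_span ⟨i, rfl⟩)
    have h2 : v z i - v z' i = ((z i - z' i : L) : Fin 4 → k) := by
      simp [v]
    have h3 : v z i - v z' i ∈ Submodule.span k (Set.range (v z)) ⊓ L :=
      ⟨h1, h2 ▸ Subtype.mem _⟩
    rw [hsk, Submodule.mem_bot, h2] at h3
    exact sub_eq_zero.1 (Subtype.ext h3)
  · rintro ⟨M, ⟨hM2, hMX⟩, hML⟩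
    have hM2 : finrank k M = 2 := hM2
    have hML : M ⊓ L = ⊥ := hML
    rw [hiso] at hMX
    have htop : M ⊔ L = ⊤ := by
      apply Submodule.eq_top_of_finrank_eq
      have := Submodule.finrank_sup_add_finrank_inf_eq M L
      rw [hML, hM2, hL2, finrank_bot] at this
      simp; omega
    have : ∀ i, ∃ l : L, (b i : Fin 4 → k) + l ∈ M := by
      intro i
      obtain ⟨m, hm, l, hl, h⟩ := Submodule.mem_sup.1
        (htop ▸ Submodule.mem_top (x := (b i : Fin 4 → k)))
      refine ⟨-⟨l, hl⟩, ?_⟩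
      rw [← h]; simpa using hm
    choose z hz using this
    refine ⟨⟨z, ?_⟩, ?_⟩
    · funext i j
      rw [← hBv]
      exact hMX _ (hz i) _ (hz j)
    · apply Subtype.ext
      apply Submodule.eq_of_le_of_finrank_eq
      · rw [Submodule.span_le]
        rintro _ ⟨i, rfl⟩
        exact hz i
      · rw [hM2]; exact hf2 z
end

section
/- Let X be a smooth extremal surface of degree q+1 in ℙ³(k). Then the set of all lines on X has cardinality exactly (q³+1)(q+1) = q⁴+q³+q+1. (Equivalently, since the degree is d = q+1, the surface X contains exactly d²(d²−3d+3) lines.) -/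
open Module

section Lang

set_option linter.unusedSectionVars false

variable {k : Type*} [Field k] [IsAlgClosed k]

/-- Auxiliary polynomials for the fixed vector lemma. -/
noncomputable def langPoly (Q : ℕ) (a : ℕ → k) : ℕ → Polynomial k
  | 0 => Polynomial.C (a 0)
  | n + 1 => Polynomial.X ^ (Q * (Q - 1)) * langPoly Q a n ^ Q + Polynomial.C (a (n + 1))

lemma langPoly_ne_zero (Q : ℕ) (hQ : 2 ≤ Q) (a : ℕ → k) (n : ℕ)
    (h : langPoly Q a n = 0) : ∀ i ≤ n, a i = 0 := by
  induction n with
  | zero =>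
    intro i hi
    obtain rfl : i = 0 := by omega
    simpa [langPoly] using h
  | succ n ih =>
    have hpos : Q * (Q - 1) ≠ 0 := by
      apply Nat.mul_ne_zero <;> omega
    have h0 : a (n + 1) = 0 := by
      have := congrArg (Polynomial.eval 0) h
      simpa [langPoly, hpos] using this
    have h1 : langPoly Q a n = 0 := by
      rw [langPoly, h0] at h
      simp only [map_zero, add_zero, mul_eq_zero] at h
      rcases h with h | h
      · exact absurd h (pow_ne_zero _ Polynomial.X_ne_zero)
      · exact pow_eq_zero_iff (by omega) |>.1 h
    intro i hi
    rcases Nat.lt_or_ge i (n + 1) with h' | h'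
    · exact ih h1 i (by omega)
    · obtain rfl : i = n + 1 := by omega
      exact h0

lemma exists_lang_seq (Q : ℕ) (hQ : 2 ≤ Q) (a : ℕ → k) (n : ℕ)
    (h : ∃ i ≤ n, a i ≠ 0) : ∃ (c : ℕ → k), c n ≠ 0 ∧ c 0 = a 0 * c n ^ Q ∧
      ∀ i, c (i + 1) = c i ^ Q + a (i + 1) * c n ^ Q := by
  have hR : langPoly Q a n ≠ 0 := by
    intro h0
    obtain ⟨i, hi, hi'⟩ := h
    exact hi' (langPoly_ne_zero Q hQ a n h0 i hi)
  have hdeg : (Polynomial.X ^ (Q - 1) * langPoly Q a n - Polynomial.C 1).degree ≠ 0 := by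
    have h1 : 0 < (Polynomial.X ^ (Q - 1) * langPoly Q a n).degree := by
      rw [Polynomial.degree_mul, Polynomial.degree_X_pow, Polynomial.degree_eq_natDegree hR]
      norm_cast
      omega
    rw [Polynomial.degree_sub_C h1]
    exact h1.ne'
  obtain ⟨t, ht⟩ := IsAlgClosed.exists_root _ hdeg
  have ht1 : t ^ (Q - 1) * (langPoly Q a n).eval t = 1 := by
    have : t ^ (Q - 1) * (langPoly Q a n).eval t - 1 = 0 := by
      simpa [Polynomial.IsRoot] using ht
    linear_combination this
  have ht0 : t ≠ 0 := by
    rintro rfl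
    rw [zero_pow (by omega)] at ht1
    simp at ht1
  have htQ : t ^ Q = t * t ^ (Q - 1) := by
    rw [← pow_succ']
    congr 1
    omega
  have hcn : t ^ Q * (langPoly Q a n).eval t = t := by
    rw [htQ, mul_assoc, ht1, mul_one]
  refine ⟨fun i => t ^ Q * (langPoly Q a i).eval t, ?_, ?_, ?_⟩
  · simpa only [hcn] using ht0
  · simp only [hcn, langPoly, Polynomial.eval_C]
    ring
  · intro i
    simp only [hcn, langPoly, Polynomial.eval_add, Polynomial.eval_mul, Polynomial.eval_pow,
      Polynomial.eval_X, Polynomial.eval_C, mul_pow]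
    have : (t ^ Q) ^ Q = t ^ Q * t ^ (Q * (Q - 1)) := by
      rw [← pow_mul, ← pow_add]
      congr 1
      obtain ⟨r, rfl⟩ : ∃ r, Q = r + 1 := ⟨Q - 1, by omega⟩
      simp
      ring
    rw [this]
    ring

variable {V : Type*} [AddCommGroup V] [Module k V] [FiniteDimensional k V]

lemma exists_fixed_s3 (Q : ℕ) (hQ : 2 ≤ Q) (σ : k →+* k) (hσ : ∀ a, σ a = a ^ Q)
    (φ : V →ₛₗ[σ] V) (hφ : Function.Injective φ) [Nontrivial V] :
    ∃ v : V, v ≠ 0 ∧ φ v = v := by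
  obtain ⟨v, hv⟩ := exists_ne (0 : V)
  let b : ℕ → V := fun i => φ^[i] v
  have hb : ∀ i, φ (b i) = b (i + 1) := fun i => (Function.iterate_succ_apply' _ _ _).symm
  have hb0 : ∀ i, b i ≠ 0 := by
    intro i
    induction i with
    | zero => exact hv
    | succ i ih =>
      rw [← hb]
      intro h
      exact ih (hφ (by rw [h, map_zero]))
  let S : ℕ →o Submodule k V := ⟨fun n => Submodule.span k (b '' Set.Iio n), fun m n h =>
    Submodule.span_mono (Set.image_mono (Set.Iio_subset_Iio h))⟩
  have hex : ∃ n, b n ∈ S n := by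
    obtain ⟨n, hn⟩ := monotone_stabilizes_iff_noetherian.mpr
      (inferInstance : IsNoetherian k V) S
    refine ⟨n, ?_⟩
    rw [hn (n + 1) (by omega)]
    exact Submodule.subset_span ⟨n, by simp, rfl⟩
  classical
  obtain ⟨m, hm, hmin⟩ : ∃ m, b m ∈ S m ∧ ∀ j < m, b j ∉ S j :=
    ⟨Nat.find hex, Nat.find_spec hex, fun j hj => Nat.find_min hex hj⟩
  obtain ⟨n, rfl⟩ : ∃ n, m = n + 1 := by
    cases m with
    | zero =>
      exfalso
      apply hb0 0
      have hm' : b 0 ∈ Submodule.span k (b '' Set.Iio 0) := hm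
      simpa using hm'
    | succ n => exact ⟨n, rfl⟩
  have hS : S (n + 1) = Submodule.span k (b '' (Finset.range (n + 1) : Set ℕ)) := by
    simp only [Finset.coe_range]
    rfl
  rw [hS, Submodule.mem_span_image_finset_iff_exists_fun'] at hm
  obtain ⟨a, ha⟩ := hm
  have hane : ∃ i ≤ n, a i ≠ 0 := by
    by_contra! hcon
    apply hb0 (n + 1)
    rw [← ha]
    apply Finset.sum_eq_zero
    intro i hi
    rw [hcon i (by simpa [Nat.lt_succ_iff] using hi), zero_smul]
  obtain ⟨c, hcn, hc0, hcs⟩ := exists_lang_seq Q hQ a n hane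
  refine ⟨∑ i ∈ Finset.range (n + 1), c i • b i, ?_, ?_⟩
  · intro h
    apply hmin n (by omega)
    rw [Finset.sum_range_succ] at h
    have h2 : b n = -((c n)⁻¹ • ∑ i ∈ Finset.range n, c i • b i) := by
      rw [eq_neg_of_add_eq_zero_left h, smul_neg, neg_neg, smul_smul, inv_mul_cancel₀ hcn,
        one_smul]
    rw [h2]
    apply Submodule.neg_mem
    apply Submodule.smul_mem
    apply Submodule.sum_mem
    intro i hi
    exact Submodule.smul_mem _ _ (Submodule.subset_span ⟨i, by simpa using hi, rfl⟩)
  · have h1 : φ (∑ i ∈ Finset.range (n + 1), c i • b i)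
        = ∑ i ∈ Finset.range (n + 1), c i ^ Q • b (i + 1) := by
      rw [map_sum]
      apply Finset.sum_congr rfl
      intro i _
      rw [LinearMap.map_smulₛₗ, hσ, hb]
    rw [h1, Finset.sum_range_succ, ← ha, Finset.sum_range_succ' (fun i => a i • b i),
      Finset.sum_range_succ' (fun i => c i • b i), smul_add, ← add_assoc, Finset.smul_sum,
      ← Finset.sum_add_distrib]
    congr 1
    · apply Finset.sum_congr rfl
      intro i _
      rw [hcs, smul_smul, add_smul, mul_comm]
    · rw [hc0, smul_smul, mul_comm]

lemma exists_artin_schreier (Q : ℕ) (hQ : 2 ≤ Q) (d : k) : ∃ c : k, c ^ Q - c = d := by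
  have hdeg : (Polynomial.X ^ Q - Polynomial.X - Polynomial.C d : Polynomial k).degree ≠ 0 := by
    have h1 : (Polynomial.X ^ Q - Polynomial.X - Polynomial.C d : Polynomial k)
        = Polynomial.X ^ Q - (Polynomial.X + Polynomial.C d) := by ring
    have h2 : (Polynomial.X + Polynomial.C d : Polynomial k).degree
        < (Polynomial.X ^ Q : Polynomial k).degree := by
      rw [Polynomial.degree_X_add_C, Polynomial.degree_X_pow]
      exact_mod_cast (by omega : 1 < Q)
    rw [h1, Polynomial.degree_sub_eq_left_of_degree_lt h2, Polynomial.degree_X_pow]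
    exact_mod_cast (by omega : Q ≠ 0)
  obtain ⟨t, ht⟩ := IsAlgClosed.exists_root _ hdeg
  refine ⟨t, ?_⟩
  have : t ^ Q - t - d = 0 := by simpa [Polynomial.IsRoot] using ht
  linear_combination this

theorem span_fixed (Q : ℕ) (hQ : 2 ≤ Q) (σ : k →+* k) (hσ : ∀ a, σ a = a ^ Q)
    (φ : V →ₛₗ[σ] V) (hφ : Function.Injective φ) :
    Submodule.span k {v : V | φ v = v} = ⊤ := by
  set W := Submodule.span k {v : V | φ v = v} with hW
  have hroot : ∀ a : k, ∃ b, σ b = a := by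
    intro a
    obtain ⟨b, hb⟩ := IsAlgClosed.exists_pow_nat_eq a (by omega : 0 < Q)
    exact ⟨b, by rw [hσ, hb]⟩
  have hstab : W ≤ W.comap φ := by
    rw [hW, Submodule.span_le]
    intro v hv
    have hv' : φ v = v := hv
    simp only [SetLike.mem_coe, Submodule.mem_comap, hv']
    exact Submodule.subset_span hv
  have hsurj : ∀ w ∈ W, ∃ w' ∈ W, φ w' = w := by
    intro w hw
    induction hw using Submodule.closure_induction with
    | zero => exact ⟨0, W.zero_mem, map_zero _⟩
    | add x y _ _ hx hy =>
      obtain ⟨x', hx', rfl⟩ := hx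
      obtain ⟨y', hy', rfl⟩ := hy
      exact ⟨x' + y', W.add_mem hx' hy', map_add _ _ _⟩
    | smul_mem r x hx =>
      obtain ⟨s, hs⟩ := hroot r
      refine ⟨s • x, W.smul_mem _ (Submodule.subset_span hx), ?_⟩
      have hx' : φ x = x := hx
      rw [LinearMap.map_smulₛₗ, hs, hx']
  have has : ∀ w ∈ W, ∃ w' ∈ W, φ w' - w' = w := by
    intro w hw
    induction hw using Submodule.closure_induction with
    | zero => exact ⟨0, W.zero_mem, by simp⟩
    | add x y _ _ hx hy =>
      obtain ⟨x', hx', rfl⟩ := hx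
      obtain ⟨y', hy', rfl⟩ := hy
      exact ⟨x' + y', W.add_mem hx' hy', by rw [map_add]; abel⟩
    | smul_mem r x hx =>
      obtain ⟨s, hs⟩ := exists_artin_schreier Q hQ r
      refine ⟨s • x, W.smul_mem _ (Submodule.subset_span hx), ?_⟩
      have hx' : φ x = x := hx
      rw [LinearMap.map_smulₛₗ, hσ, hx', ← sub_smul, hs]
  by_contra hne
  have : Nontrivial (V ⧸ W) := Submodule.Quotient.nontrivial_iff.2 hne
  have hinj : Function.Injective (W.mapQ W φ hstab) := by
    rw [injective_iff_map_eq_zero]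
    intro x
    induction x using Submodule.Quotient.induction_on with
    | H x =>
      intro hx
      have hx1 : (Submodule.Quotient.mk (φ x) : V ⧸ W) = 0 := hx
      rw [Submodule.Quotient.mk_eq_zero] at hx1 ⊢
      obtain ⟨w', hw', h⟩ := hsurj _ hx1
      rwa [← hφ h]
  obtain ⟨v, hv0, hv⟩ := exists_fixed_s3 Q hQ σ hσ (W.mapQ W φ hstab) hinj
  induction v using Submodule.Quotient.induction_on with
  | H x =>
    have h1 : (Submodule.Quotient.mk (φ x) : V ⧸ W) = Submodule.Quotient.mk x := hv
    rw [Submodule.Quotient.eq] at h1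
    obtain ⟨w', hw', h⟩ := has _ h1
    apply hv0
    rw [Submodule.Quotient.mk_eq_zero]
    have h2 : x - w' ∈ W := by
      apply Submodule.subset_span
      change φ (x - w') = x - w'
      rw [map_sub]
      have : φ x - φ w' - (x - w') = (φ x - x) - (φ w' - w') := by abel
      rw [← sub_eq_zero, this, h, sub_self]
    simpa using W.add_mem h2 hw'

end Lang

section Herm

set_option linter.unusedSectionVars false

variable {k : Type*} [Field k] [IsAlgClosed k]
variable {V : Type*} [AddCommGroup V] [Module k V] [FiniteDimensional k V]

lemma exists_isotropic (q : ℕ) (hq : 2 ≤ q) (σ τ : k →+* k) (hτ : ∀ a, τ a = a ^ q)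
    (hστ : ∀ a, σ a = τ (τ a)) (φ : V →ₛₗ[σ] V) (B : V →ₛₗ[τ] V →ₗ[k] k)
    (hB : ∀ x y, B x (φ y) = τ (B y x)) (x y : V) (hx0 : x ≠ 0)
    (hxy : y ∉ Submodule.span k {x}) (hx : φ x = x) (hy : φ y = y) :
    ∃ e ∈ Submodule.span k {x, y}, e ≠ 0 ∧ φ e = e ∧ B e e = 0 := by
  have hxm : x ∈ Submodule.span k {x, y} := Submodule.subset_span (by simp)
  have hym : y ∈ Submodule.span k {x, y} := Submodule.subset_span (by simp)
  have hnot : ∀ s : k, y ≠ s • x := fun s h =>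
    hxy (by rw [h]; exact Submodule.smul_mem _ _ (Submodule.mem_span_singleton_self x))
  have hherm : ∀ u v, φ v = v → B u v = τ (B v u) := fun u v hv => by rw [← hB, hv]
  by_cases hxx : B x x = 0
  · exact ⟨x, hxm, hx0, hx, hxx⟩
  have hcF : σ (B x y / B x x) = B x y / B x x := by
    rw [map_div₀, hστ, hστ, ← hherm y x hx, ← hherm x y hy, ← hherm x x hx, ← hherm x x hx]
  set c := B x y / B x x with hc
  set z := y - c • x with hz
  have hzF : φ z = z := by
    rw [hz, map_sub, LinearMap.map_smulₛₗ, hcF, hx, hy]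
  have hz0 : z ≠ 0 := by
    intro h
    exact hnot c (sub_eq_zero.1 h)
  have hzm : z ∈ Submodule.span k {x, y} :=
    Submodule.sub_mem _ hym (Submodule.smul_mem _ _ hxm)
  have hxz : B x z = 0 := by
    rw [hz, map_sub, map_smul, smul_eq_mul, hc, div_mul_cancel₀ _ hxx, sub_self]
  have hzx : B z x = 0 := by
    rw [hherm z x hx, hxz, map_zero]
  by_cases hzz : B z z = 0
  · exact ⟨z, hzm, hz0, hzF, hzz⟩
  obtain ⟨t, ht⟩ := IsAlgClosed.exists_pow_nat_eq (-(B z z / B x x)) (by omega : 0 < q + 1)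
  have hd0 : -(B z z / B x x) ≠ 0 := neg_ne_zero.2 (div_ne_zero hzz hxx)
  have htt : τ t * t = -(B z z / B x x) := by
    rw [hτ, ← pow_succ, ht]
  have ht0 : t ≠ 0 := by
    rintro rfl
    rw [mul_zero] at htt
    exact hd0 htt.symm
  have hτt0 : τ t ≠ 0 := by
    rw [hτ]
    exact pow_ne_zero _ ht0
  have htF : σ t = t := by
    have h := congrArg τ htt
    rw [map_mul, map_neg, map_div₀, ← hherm z z hzF, ← hherm x x hx, ← htt] at h
    rw [hστ]
    exact mul_right_cancel₀ hτt0 (by rw [h, mul_comm])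
  refine ⟨t • x + z, Submodule.add_mem _ (Submodule.smul_mem _ _ hxm) hzm, ?_, ?_, ?_⟩
  · intro h
    apply hnot (c - t)
    have : y = t • x + z + (c - t) • x := by
      rw [hz, sub_smul]
      abel
    rw [this, h, zero_add]
  · rw [map_add, LinearMap.map_smulₛₗ, htF, hx, hzF]
  · simp only [map_add, LinearMap.map_smulₛₗ, LinearMap.add_apply, LinearMap.smul_apply,
      smul_eq_mul, hxz, hzx, RingHom.id_apply]
    have : τ t * (t * B x x) = -(B z z) := by
      rw [← mul_assoc, htt, neg_mul, div_mul_cancel₀ _ hxx]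
    linear_combination this

lemma exists_trace (q : ℕ) (hq : 2 ≤ q) (d : k) : ∃ c : k, c ^ q + c = d := by
  have hdeg : (Polynomial.X ^ q + (Polynomial.X - Polynomial.C d) : Polynomial k).degree ≠ 0 := by
    have h2 : (Polynomial.X - Polynomial.C d : Polynomial k).degree
        < (Polynomial.X ^ q : Polynomial k).degree := by
      rw [Polynomial.degree_X_sub_C, Polynomial.degree_X_pow]
      exact_mod_cast (by omega : 1 < q)
    rw [Polynomial.degree_add_eq_left_of_degree_lt h2, Polynomial.degree_X_pow]
    exact_mod_cast (by omega : q ≠ 0)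
  obtain ⟨t, ht⟩ := IsAlgClosed.exists_root _ hdeg
  refine ⟨t, ?_⟩
  have : t ^ q + (t - d) = 0 := by simpa [Polynomial.IsRoot] using ht
  linear_combination this

lemma exists_partner (q : ℕ) (hq : 2 ≤ q) (σ τ : k →+* k) (hτ : ∀ a, τ a = a ^ q)
    (hστ : ∀ a, σ a = τ (τ a)) (φ : V →ₛₗ[σ] V) (B : V →ₛₗ[τ] V →ₗ[k] k)
    (hB : ∀ x y, B x (φ y) = τ (B y x)) (e z : V) (hez : B e z ≠ 0)
    (he : φ e = e) (hz : φ z = z) (hee : B e e = 0) :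
    ∃ f ∈ Submodule.span k {e, z}, φ f = f ∧ B f f = 0 ∧ B e f = 1 ∧ B f e = 1 := by
  have hem : e ∈ Submodule.span k {e, z} := Submodule.subset_span (by simp)
  have hzm : z ∈ Submodule.span k {e, z} := Submodule.subset_span (by simp)
  have hherm : ∀ u v, φ v = v → B u v = τ (B v u) := fun u v hv => by rw [← hB, hv]
  set w := (B e z)⁻¹ • z with hw
  have hwm : w ∈ Submodule.span k {e, z} := Submodule.smul_mem _ _ hzm
  have hwF : φ w = w := by
    rw [hw, LinearMap.map_smulₛₗ, hz, map_inv₀, hστ, ← hherm z e he, ← hherm e z hz]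
  have hew : B e w = 1 := by
    rw [hw, map_smul, smul_eq_mul, inv_mul_cancel₀ hez]
  have hwe : B w e = 1 := by
    rw [hherm w e he, hew, map_one]
  obtain ⟨s, hs⟩ := exists_trace q hq (B w w)
  have hs' : τ s + s = B w w := by rw [hτ, hs]
  have hsF : σ s = s := by
    have h := congrArg τ hs'
    rw [map_add, ← hherm w w hwF, ← hs'] at h
    rw [hστ]
    linear_combination h
  refine ⟨w - s • e, Submodule.sub_mem _ hwm (Submodule.smul_mem _ _ hem), ?_, ?_, ?_, ?_⟩
  · rw [map_sub, hwF, LinearMap.map_smulₛₗ, he, hsF]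
  · simp only [map_sub, LinearMap.map_smulₛₗ, LinearMap.sub_apply, LinearMap.smul_apply,
      smul_eq_mul, hee, hew, hwe, RingHom.id_apply]
    linear_combination -hs'
  · simp [hew, hee]
  · simp [LinearMap.map_smulₛₗ, hwe, hee]

theorem exists_hyperbolic (q : ℕ) (hq : 2 ≤ q) (σ τ : k →+* k) (hτ : ∀ a, τ a = a ^ q)
    (hστ : ∀ a, σ a = τ (τ a)) (φ : V →ₛₗ[σ] V) (B : V →ₛₗ[τ] V →ₗ[k] k)
    (hB : ∀ x y, B x (φ y) = τ (B y x)) (hnd : ∀ x, (∀ y, B x y = 0) → x = 0)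
    (hV : finrank k V = 4) :
    ∃ e f g h : V, B e e = 0 ∧ B f f = 0 ∧ B g g = 0 ∧ B h h = 0 ∧
      B e f = 1 ∧ B f e = 1 ∧ B g h = 1 ∧ B h g = 1 ∧
      B e g = 0 ∧ B g e = 0 ∧ B e h = 0 ∧ B h e = 0 ∧
      B f g = 0 ∧ B g f = 0 ∧ B f h = 0 ∧ B h f = 0 := by
  have hherm : ∀ u v, φ v = v → B u v = τ (B v u) := fun u v hv => by rw [← hB, hv]
  have hinj : Function.Injective φ := by
    rw [injective_iff_map_eq_zero]
    intro x hx
    apply hnd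
    intro y
    have := hB y x
    rw [hx, map_zero] at this
    exact (map_eq_zero τ).1 this.symm
  have hspan := span_fixed (q * q) (by nlinarith) σ
    (fun a => by rw [hστ, hτ, hτ, ← pow_mul]) φ hinj
  have hout : ∀ T : Submodule k V, T ≠ ⊤ → ∃ z, φ z = z ∧ z ∉ T := by
    intro T hT
    by_contra! hcon
    apply hT
    rw [eq_top_iff, ← hspan, Submodule.span_le]
    exact fun z hz => hcon z hz
  classical
  have hout' : ∀ T : Finset V, T.card < 4 → ∃ z, φ z = z ∧ z ∉ Submodule.span k (T : Set V) := by
    intro T hT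
    apply hout
    intro h
    have := finrank_span_finset_le_card (R := k) T
    rw [Set.finrank, h, finrank_top, hV] at this
    omega
  have hdual : ∀ e, e ≠ 0 → ∃ z, φ z = z ∧ B e z ≠ 0 := by
    intro e he
    obtain ⟨z, hz, hz'⟩ := hout (LinearMap.ker (B e)) (by
      intro h
      apply he
      apply hnd
      intro y
      have : y ∈ LinearMap.ker (B e) := by rw [h]; trivial
      exact this)
    exact ⟨z, hz, hz'⟩
  obtain ⟨x, hxF, hx⟩ := hout' ∅ (by simp)
  obtain ⟨y, hyF, hy⟩ := hout' {x} (by simp)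
  have hx0 : x ≠ 0 := fun h => hx (by rw [h]; exact Submodule.zero_mem _)
  obtain ⟨e, -, he0, heF, hee⟩ := exists_isotropic q hq σ τ hτ hστ φ B hB x y hx0
    (by simpa using hy) hxF hyF
  obtain ⟨z, hzF, hez⟩ := hdual e he0
  obtain ⟨f, -, hfF, hff, hef, hfe⟩ := exists_partner q hq σ τ hτ hστ φ B hB e z hez heF hzF hee
  let P : V → V := fun v => v - B e v • f - B f v • e
  have hPF : ∀ v, φ v = v → φ (P v) = P v := by
    intro v hv
    simp only [P, map_sub, LinearMap.map_smulₛₗ, hv, heF, hfF]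
    rw [hστ, hστ, ← hherm v e heF, ← hherm v f hfF, ← hherm e v hv, ← hherm f v hv]
  have hPe : ∀ v, B e (P v) = 0 := by
    intro v
    simp [P, hef, hee]
  have hPf : ∀ v, B f (P v) = 0 := by
    intro v
    simp [P, hfe, hff]
  have hPsub : ∀ v, v = P v + (B e v • f + B f v • e) := by
    intro v
    simp only [P]
    abel
  obtain ⟨u, huF, hu⟩ := hout' {e, f} (by
    have := Finset.card_le_two (a := e) (b := f); omega)
  have hu0 : P u ≠ 0 := by
    intro h
    apply hu
    rw [hPsub u, h, zero_add]
    exact Submodule.add_mem _ (Submodule.smul_mem _ _ (Submodule.subset_span (by simp)))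
      (Submodule.smul_mem _ _ (Submodule.subset_span (by simp)))
  obtain ⟨v, hvF, hv⟩ := hout' {e, f, P u} (by
    have := Finset.card_le_three (a := e) (b := f) (c := P u); omega)
  have hv0 : P v ∉ Submodule.span k {P u} := by
    intro h
    apply hv
    rw [hPsub v]
    refine Submodule.add_mem _ (Submodule.span_mono (by simp) h) (Submodule.add_mem _
      (Submodule.smul_mem _ _ (Submodule.subset_span (by simp)))
      (Submodule.smul_mem _ _ (Submodule.subset_span (by simp))))
  obtain ⟨g, hgm, hg0, hgF, hgg⟩ := exists_isotropic q hq σ τ hτ hστ φ B hB (P u) (P v) hu0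
    hv0 (hPF u huF) (hPF v hvF)
  have hker : ∀ (a b w l : V), w ∈ Submodule.span k {a, b} → B l a = 0 → B l b = 0 →
      B l w = 0 := by
    intro a b w l hw ha hb
    obtain ⟨s, t, rfl⟩ := Submodule.mem_span_pair.1 hw
    simp [ha, hb]
  have heg : B e g = 0 := hker _ _ _ _ hgm (hPe u) (hPe v)
  have hfg : B f g = 0 := hker _ _ _ _ hgm (hPf u) (hPf v)
  have hge : B g e = 0 := by rw [hherm g e heF, heg, map_zero]
  have hgf : B g f = 0 := by rw [hherm g f hfF, hfg, map_zero]
  obtain ⟨w, hwF, hgw⟩ := hdual g hg0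
  have hgPw : B g (P w) ≠ 0 := by
    simpa [P, hge, hgf] using hgw
  obtain ⟨h, hhm, hhF, hhh, hgh, hhg⟩ := exists_partner q hq σ τ hτ hστ φ B hB g (P w) hgPw
    hgF (hPF w hwF) hgg
  have heh : B e h = 0 := hker _ _ _ _ hhm heg (hPe w)
  have hfh : B f h = 0 := hker _ _ _ _ hhm hfg (hPf w)
  have hhe : B h e = 0 := by rw [hherm h e heF, heh, map_zero]
  have hhf : B h f = 0 := by rw [hherm h f hfF, hfh, map_zero]
  exact ⟨e, f, g, h, hee, hff, hgg, hhh, hef, hfe, hgh, hhg, heg, hge, heh, hhe, hfg, hgf,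
    hfh, hhf⟩

end Herm

section Count

set_option linter.unusedSectionVars false

variable {k : Type*} [Field k] [IsAlgClosed k]

/-- The standard hyperbolic Hermitian-type form. -/
def hypForm (q : ℕ) (x y : Fin 4 → k) : k :=
  x 0 ^ q * y 3 + x 1 ^ q * y 2 + x 2 ^ q * y 1 + x 3 ^ q * y 0

lemma ncard_zeros (f : Polynomial k) (hf : f.Separable) :
    {t : k | f.eval t = 0}.Finite ∧ {t : k | f.eval t = 0}.ncard = f.natDegree := by
  have h : {t : k | f.eval t = 0} = f.rootSet k := by
    ext t
    rw [Polynomial.mem_rootSet, Polynomial.coe_aeval_eq_eval]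
    exact ⟨fun h => ⟨hf.ne_zero, h⟩, fun h => h.2⟩
  refine ⟨by rw [h]; exact Polynomial.rootSet_finite f k, ?_⟩
  rw [h, ← Nat.card_coe_set_eq, Nat.card_eq_fintype_card,
    Polynomial.card_rootSet_eq_natDegree hf (IsAlgClosed.splits _)]

lemma ncard_Z (q : ℕ) (hq : 2 ≤ q) (hq0 : (q : k) = 0) :
    {t : k | t ^ q + t = 0}.Finite ∧ {t : k | t ^ q + t = 0}.ncard = q := by
  have hsep : (Polynomial.X ^ q + Polynomial.X : Polynomial k).Separable := by
    rw [Polynomial.separable_def]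
    simp [hq0, Polynomial.derivative_X_pow, isCoprime_one_right]
  have hdeg : (Polynomial.X ^ q + Polynomial.X : Polynomial k).natDegree = q := by
    rw [Polynomial.natDegree_add_eq_left_of_natDegree_lt] <;> simp
    omega
  have := ncard_zeros _ hsep
  simpa [hdeg] using this

lemma ncard_F (q : ℕ) (hq : 2 ≤ q) (hq0 : (q : k) = 0) :
    {t : k | t ^ (q * q) - t = 0}.Finite ∧ {t : k | t ^ (q * q) - t = 0}.ncard = q * q := by
  have hsep : (Polynomial.X ^ (q * q) - Polynomial.X : Polynomial k).Separable := by
    rw [Polynomial.separable_def]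
    simp [hq0, Polynomial.derivative_X_pow]
    exact isCoprime_one_right.neg_right
  have hdeg : (Polynomial.X ^ (q * q) - Polynomial.X : Polynomial k).natDegree = q * q := by
    rw [Polynomial.natDegree_sub_eq_left_of_natDegree_lt] <;> simp
    nlinarith
  have := ncard_zeros _ hsep
  simpa [hdeg] using this

/-- The lines of the big cell. -/
def cellA (q : ℕ) (t : k × k × k) : Submodule k (Fin 4 → k) :=
  Submodule.span k {![1, 0, t.2.2, t.1], ![0, 1, t.2.1, -t.2.2 ^ q]}

/-- The lines of the second cell. -/
def cellB (q : ℕ) (t : k × k) : Submodule k (Fin 4 → k) :=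
  Submodule.span k {![1, t.2, 0, t.1], ![0, 0, 1, -t.2 ^ q]}

/-- The lines of the third cell. -/
def cellC (t : k) : Submodule k (Fin 4 → k) :=
  Submodule.span k {![0, 1, t, 0], ![0, 0, 0, 1]}

/-- The line of the last cell. -/
def cellD (k : Type*) [Field k] : Submodule k (Fin 4 → k) :=
  Submodule.span k {![0, 0, 1, 0], ![0, 0, 0, 1]}

lemma mem_pair_iff (u v x : Fin 4 → k) : x ∈ Submodule.span k {u, v} ↔
    ∃ s t : k, (s * u 0 + t * v 0 = x 0 ∧ s * u 1 + t * v 1 = x 1) ∧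
      (s * u 2 + t * v 2 = x 2 ∧ s * u 3 + t * v 3 = x 3) := by
  rw [Submodule.mem_span_pair]
  constructor
  · rintro ⟨s, t, rfl⟩
    exact ⟨s, t, by simp⟩
  · rintro ⟨s, t, ⟨h0, h1⟩, h2, h3⟩
    refine ⟨s, t, ?_⟩
    ext i
    fin_cases i <;> simpa

lemma left_mem_pair (u v : Fin 4 → k) : u ∈ Submodule.span k {u, v} :=
  Submodule.subset_span (by simp)

lemma right_mem_pair (u v : Fin 4 → k) : v ∈ Submodule.span k {u, v} :=
  Submodule.subset_span (by simp)

lemma cellA_inj (q : ℕ) : Function.Injective (cellA (k := k) q) := by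
  rintro ⟨b, c, a⟩ ⟨b', c', a'⟩ h
  have hu : ![1, 0, a, b] ∈ cellA q (b', c', a') := by
    rw [← h]; exact left_mem_pair _ _
  have hv : ![0, 1, c, -a ^ q] ∈ cellA q (b', c', a') := by
    rw [← h]; exact right_mem_pair _ _
  rw [cellA, mem_pair_iff] at hu hv
  obtain ⟨s, t, ⟨h0, h1⟩, h2, h3⟩ := hu
  obtain ⟨s', t', ⟨h0', h1'⟩, h2', h3'⟩ := hv
  simp at h0 h1 h0' h1'
  subst h0 h1 h0' h1'
  simp at h2 h3 h2' h3'
  simp [h2, h3, h2']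

lemma cellB_inj (q : ℕ) : Function.Injective (cellB (k := k) q) := by
  rintro ⟨b, a⟩ ⟨b', a'⟩ h
  have hu : ![1, a, 0, b] ∈ cellB q (b', a') := by
    rw [← h]; exact left_mem_pair _ _
  rw [cellB, mem_pair_iff] at hu
  obtain ⟨s, t, ⟨h0, h1⟩, h2, h3⟩ := hu
  simp at h0 h2
  subst h0 h2
  simp at h1 h3
  simp [h1, h3]

lemma cellC_inj : Function.Injective (cellC (k := k)) := by
  rintro a a' h
  have hu : ![0, 1, a, 0] ∈ cellC a' := by
    rw [← h]; exact left_mem_pair _ _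
  rw [cellC, mem_pair_iff] at hu
  obtain ⟨s, t, ⟨h0, h1⟩, h2, h3⟩ := hu
  simp at h1 h3
  subst h1 h3
  simp at h2
  simp [h2]

lemma cellAB (q : ℕ) (t : k × k × k) (s : k × k) : cellA q t ≠ cellB q s := by
  intro h
  have hu := right_mem_pair ![1, 0, t.2.2, t.1] ![0, 1, t.2.1, -t.2.2 ^ q]
  change _ ∈ cellA q t at hu
  rw [h, cellB, mem_pair_iff] at hu
  obtain ⟨a, b, ⟨h0, h1⟩, -⟩ := hu
  simp at h0
  subst h0
  simp at h1

lemma cellAC (q : ℕ) (t : k × k × k) (s : k) : cellA q t ≠ cellC s := by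
  intro h
  have hu := left_mem_pair ![1, 0, t.2.2, t.1] ![0, 1, t.2.1, -t.2.2 ^ q]
  change _ ∈ cellA q t at hu
  rw [h, cellC, mem_pair_iff] at hu
  obtain ⟨a, b, ⟨h0, -⟩, -⟩ := hu
  simp at h0

lemma cellAD (q : ℕ) (t : k × k × k) : cellA q t ≠ cellD k := by
  intro h
  have hu := left_mem_pair ![1, 0, t.2.2, t.1] ![0, 1, t.2.1, -t.2.2 ^ q]
  change _ ∈ cellA q t at hu
  rw [h, cellD, mem_pair_iff] at hu
  obtain ⟨a, b, ⟨h0, -⟩, -⟩ := hu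
  simp at h0

lemma cellBC (q : ℕ) (t : k × k) (s : k) : cellB q t ≠ cellC s := by
  intro h
  have hu := left_mem_pair ![1, t.2, 0, t.1] ![0, 0, 1, -t.2 ^ q]
  change _ ∈ cellB q t at hu
  rw [h, cellC, mem_pair_iff] at hu
  obtain ⟨a, b, ⟨h0, -⟩, -⟩ := hu
  simp at h0

lemma cellBD (q : ℕ) (t : k × k) : cellB q t ≠ cellD k := by
  intro h
  have hu := left_mem_pair ![1, t.2, 0, t.1] ![0, 0, 1, -t.2 ^ q]
  change _ ∈ cellB q t at hu
  rw [h, cellD, mem_pair_iff] at hu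
  obtain ⟨a, b, ⟨h0, -⟩, -⟩ := hu
  simp at h0

lemma cellCD (t : k) : cellC t ≠ cellD k := by
  intro h
  have hu := left_mem_pair ![0, 1, t, 0] ![0, 0, 0, 1]
  change _ ∈ cellC t at hu
  rw [h, cellD, mem_pair_iff] at hu
  obtain ⟨a, b, ⟨-, h0⟩, -⟩ := hu
  simp at h0

lemma ncard_cells (q : ℕ) (hq : 2 ≤ q) (hq0 : (q : k) = 0) :
    (cellA q '' ({t : k | t ^ q + t = 0} ×ˢ {t : k | t ^ q + t = 0} ×ˢ
        {t : k | t ^ (q * q) - t = 0}) ∪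
      (cellB q '' ({t : k | t ^ q + t = 0} ×ˢ {t : k | t ^ (q * q) - t = 0}) ∪
      (cellC '' {t : k | t ^ q + t = 0} ∪ {cellD k}))).ncard = (q ^ 3 + 1) * (q + 1) := by
  obtain ⟨hZf, hZ⟩ := ncard_Z (k := k) q hq hq0
  obtain ⟨hFf, hF⟩ := ncard_F (k := k) q hq hq0
  have hfA := (hZf.prod (hZf.prod hFf)).image (cellA q)
  have hfB := (hZf.prod hFf).image (cellB q)
  have hfC := hZf.image cellC
  have hfD := Set.finite_singleton (cellD k)
  rw [Set.ncard_union_eq _ hfA (hfB.union (hfC.union hfD)),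
    Set.ncard_union_eq _ hfB (hfC.union hfD), Set.ncard_union_eq _ hfC hfD,
    Set.ncard_image_of_injective _ (cellA_inj q), Set.ncard_image_of_injective _ (cellB_inj q),
    Set.ncard_image_of_injective _ cellC_inj, Set.ncard_singleton, Set.ncard_prod,
    Set.ncard_prod, hZ, hF]
  · ring
  · rw [Set.disjoint_left]
    rintro _ ⟨t, -, rfl⟩ h
    exact cellCD t h
  · rw [Set.disjoint_left]
    rintro _ ⟨t, -, rfl⟩ (⟨s, -, h⟩ | h)
    · exact cellBC q t s h.symm
    · exact cellBD q t h
  · rw [Set.disjoint_left]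
    rintro _ ⟨t, -, rfl⟩ (⟨s, -, h⟩ | ⟨s, -, h⟩ | h)
    · exact cellAB q t s h.symm
    · exact cellAC q t s h.symm
    · exact cellAD q t h
lemma indep_of (u v : Fin 4 → k) (i : Fin 4) (hu : u i = 1) (hv : v i = 0) (hv0 : v ≠ 0) :
    LinearIndependent k ![u, v] := by
  rw [LinearIndependent.pair_iff]
  intro s t h
  have h1 := congrFun h i
  simp [hu, hv] at h1
  subst h1
  simpa [hv0] using h

lemma finrank_pair_s3 (u v : Fin 4 → k) (i : Fin 4) (hu : u i = 1) (hv : v i = 0) (hv0 : v ≠ 0) :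
    finrank k (Submodule.span k {u, v}) = 2 := by
  have := finrank_span_eq_card (indep_of u v i hu hv hv0)
  rw [Matrix.range_cons_cons_empty] at this
  simpa using this

lemma eq_span_pair (L : Submodule k (Fin 4 → k)) (hL : finrank k L = 2) (u v : Fin 4 → k)
    (huL : u ∈ L) (hvL : v ∈ L) (i : Fin 4) (hu : u i = 1) (hv : v i = 0) (hv0 : v ≠ 0) :
    Submodule.span k {u, v} = L := by
  apply Submodule.eq_of_le_of_finrank_eq
  · rw [Submodule.span_le]
    rintro x (rfl | rfl)
    · exact huL
    · exact hvL
  · rw [hL, finrank_pair_s3 u v i hu hv hv0]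

lemma exists_coord_zero (L : Submodule k (Fin 4 → k)) (hL : finrank k L = 2) (i : Fin 4) :
    ∃ v ∈ L, v ≠ 0 ∧ v i = 0 := by
  let f : L →ₗ[k] k := (LinearMap.proj i).comp L.subtype
  have hk : LinearMap.ker f ≠ ⊥ := f.ker_ne_bot_of_finrank_lt (by rw [finrank_self, hL]; norm_num)
  obtain ⟨⟨v, hv⟩, hvk, hv0⟩ := Submodule.exists_mem_ne_zero_of_ne_bot hk
  exact ⟨v, hv, fun h => hv0 (Subtype.ext h), hvk⟩

lemma exists_normalized (L : Submodule k (Fin 4 → k)) (v : Fin 4 → k) (hv : v ∈ L) (i : Fin 4)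
    (hi : v i ≠ 0) : ∃ u ∈ L, u i = 1 ∧ ∀ j, v j = 0 → u j = 0 :=
  ⟨(v i)⁻¹ • v, L.smul_mem _ hv, by simp [hi], fun j hj => by simp [hj]⟩

lemma hyp_pair (q : ℕ) (hadd : ∀ a b : k, (a + b) ^ q = a ^ q + b ^ q) (u v : Fin 4 → k)
    (huu : hypForm q u u = 0) (huv : hypForm q u v = 0) (hvu : hypForm q v u = 0)
    (hvv : hypForm q v v = 0) : ∀ x ∈ Submodule.span k {u, v}, ∀ y ∈ Submodule.span k {u, v},
      hypForm q x y = 0 := by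
  intro x hx y hy
  obtain ⟨s, t, rfl⟩ := Submodule.mem_span_pair.1 hx
  obtain ⟨s', t', rfl⟩ := Submodule.mem_span_pair.1 hy
  have : hypForm q (s • u + t • v) (s' • u + t' • v) = s ^ q * s' * hypForm q u u +
      s ^ q * t' * hypForm q u v + t ^ q * s' * hypForm q v u + t ^ q * t' * hypForm q v v := by
    simp only [hypForm, Pi.add_apply, Pi.smul_apply, smul_eq_mul, hadd, mul_pow]
    ring
  rw [this, huu, huv, hvu, hvv]
  ring

lemma eq_vec (u : Fin 4 → k) (a b c d : k) (h0 : u 0 = a) (h1 : u 1 = b) (h2 : u 2 = c)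
    (h3 : u 3 = d) : u = ![a, b, c, d] := by
  ext i
  fin_cases i <;> simpa

lemma lines_eq_cells (q : ℕ) (hq : 2 ≤ q) (hadd : ∀ a b : k, (a + b) ^ q = a ^ q + b ^ q) :
    {L : Submodule k (Fin 4 → k) | finrank k L = 2 ∧ ∀ x ∈ L, ∀ y ∈ L, hypForm q x y = 0} =
    (cellA q '' ({t : k | t ^ q + t = 0} ×ˢ {t : k | t ^ q + t = 0} ×ˢ
        {t : k | t ^ (q * q) - t = 0}) ∪
      (cellB q '' ({t : k | t ^ q + t = 0} ×ˢ {t : k | t ^ (q * q) - t = 0}) ∪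
      (cellC '' {t : k | t ^ q + t = 0} ∪ {cellD k}))) := by
  have hq0 : q ≠ 0 := by omega
  have hneg : ∀ x : k, (-x) ^ q = -x ^ q := by
    intro x
    have h := hadd x (-x)
    rw [add_neg_cancel, zero_pow hq0] at h
    linear_combination -h
  apply Set.Subset.antisymm
  · rintro L ⟨hL, hiso⟩
    by_cases h0 : ∃ w ∈ L, w 0 ≠ 0
    · obtain ⟨w, hwL, hw⟩ := h0
      obtain ⟨u, huL, hu0, -⟩ := exists_normalized L w hwL 0 hw
      obtain ⟨v, hvL, hvne, hv0⟩ := exists_coord_zero L hL 0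
      by_cases hv1 : v 1 = 0
      · by_cases hv2 : v 2 = 0
        · exfalso
          have h := hiso u huL v hvL
          simp [hypForm, hu0, hv0, hv1, hv2] at h
          apply hvne
          rw [eq_vec v 0 0 0 0 hv0 hv1 hv2 h]
          ext i
          fin_cases i <;> rfl
        · skip
          right; left
          obtain ⟨v', hv'L, hv'2, hv'⟩ := exists_normalized L v hvL 2 hv2
          have hv'0 := hv' 0 hv0
          have hv'1 := hv' 1 hv1
          have hv'ne : v' ≠ 0 := fun h => by simp [h] at hv'2
          set u' := u - u 2 • v' with hu'
          have hu'L : u' ∈ L := L.sub_mem huL (L.smul_mem _ hv'L)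
          have hu'0 : u' 0 = 1 := by simp [hu', hu0, hv'0]
          have hu'2 : u' 2 = 0 := by simp [hu', hv'2]
          have huu := hiso u' hu'L u' hu'L
          have huv := hiso u' hu'L v' hv'L
          have hvu := hiso v' hv'L u' hu'L
          simp [hypForm, hu'0, hu'2, hv'0, hv'1, hv'2, hq0] at huu huv hvu
          have hv'3 : v' 3 = -(u' 1) ^ q := by linear_combination huv
          refine ⟨(u' 3, u' 1), ⟨?_, ?_⟩, ?_⟩
          · change u' 3 ^ q + u' 3 = 0
            linear_combination huu
          · change u' 1 ^ (q * q) - u' 1 = 0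
            rw [hv'3, hneg, ← pow_mul] at hvu
            linear_combination -hvu
          · rw [← eq_span_pair L hL u' v' hu'L hv'L 0 hu'0 hv'0 hv'ne, cellB,
              eq_vec v' 0 0 1 _ hv'0 hv'1 hv'2 hv'3]
            congr 2
            exact (eq_vec u' _ _ _ _ hu'0 rfl hu'2 rfl).symm
      · skip
        left
        obtain ⟨v', hv'L, hv'1, hv'⟩ := exists_normalized L v hvL 1 hv1
        have hv'0 := hv' 0 hv0
        have hv'ne : v' ≠ 0 := fun h => by simp [h] at hv'1
        set u' := u - u 1 • v' with hu'
        have hu'L : u' ∈ L := L.sub_mem huL (L.smul_mem _ hv'L)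
        have hu'0 : u' 0 = 1 := by simp [hu', hu0, hv'0]
        have hu'1 : u' 1 = 0 := by simp [hu', hv'1]
        have huu := hiso u' hu'L u' hu'L
        have huv := hiso u' hu'L v' hv'L
        have hvu := hiso v' hv'L u' hu'L
        have hvv := hiso v' hv'L v' hv'L
        simp [hypForm, hu'0, hu'1, hv'0, hv'1, hq0] at huu huv hvu hvv
        have hv'3 : v' 3 = -(u' 2) ^ q := by linear_combination huv
        refine ⟨(u' 3, v' 2, u' 2), ⟨?_, ?_, ?_⟩, ?_⟩
        · change u' 3 ^ q + u' 3 = 0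
          linear_combination huu
        · change v' 2 ^ q + v' 2 = 0
          linear_combination hvv
        · change u' 2 ^ (q * q) - u' 2 = 0
          rw [hv'3, hneg, ← pow_mul] at hvu
          linear_combination -hvu
        · rw [← eq_span_pair L hL u' v' hu'L hv'L 0 hu'0 hv'0 hv'ne, cellA]
          congr 2
          · exact (eq_vec u' _ _ _ _ hu'0 hu'1 rfl rfl).symm
          · congr 1
            exact (eq_vec v' _ _ _ _ hv'0 hv'1 rfl hv'3).symm
    · push Not at h0
      right; right
      by_cases h1 : ∃ w ∈ L, w 1 ≠ 0
      · left
        obtain ⟨w, hwL, hw⟩ := h1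
        obtain ⟨u, huL, hu1, -⟩ := exists_normalized L w hwL 1 hw
        obtain ⟨v, hvL, hvne, hv1⟩ := exists_coord_zero L hL 1
        have hv0 := h0 v hvL
        have huv := hiso u huL v hvL
        simp [hypForm, h0 u huL, hv0, hv1, hu1, hq0] at huv
        have hv3 : v 3 ≠ 0 := by
          intro hv3
          apply hvne
          rw [eq_vec v 0 0 0 0 hv0 hv1 huv hv3]
          ext i
          fin_cases i <;> rfl
        obtain ⟨v', hv'L, hv'3, hv'⟩ := exists_normalized L v hvL 3 hv3
        have hv'0 := hv' 0 hv0
        have hv'1 := hv' 1 hv1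
        have hv'2 := hv' 2 huv
        have hv'ne : v' ≠ 0 := fun h => by simp [h] at hv'3
        set u' := u - u 3 • v' with hu'
        have hu'L : u' ∈ L := L.sub_mem huL (L.smul_mem _ hv'L)
        have hu'0 : u' 0 = 0 := h0 u' hu'L
        have hu'1 : u' 1 = 1 := by simp [hu', hu1, hv'1]
        have hu'3 : u' 3 = 0 := by simp [hu', hv'3]
        have huu := hiso u' hu'L u' hu'L
        simp [hypForm, hu'0, hu'1, hu'3] at huu
        refine ⟨u' 2, ?_, ?_⟩
        · change u' 2 ^ q + u' 2 = 0
          linear_combination huu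
        · rw [← eq_span_pair L hL u' v' hu'L hv'L 1 hu'1 hv'1 hv'ne, cellC,
            eq_vec v' _ _ _ _ hv'0 hv'1 hv'2 hv'3]
          congr 2
          exact (eq_vec u' _ _ _ _ hu'0 hu'1 rfl hu'3).symm
      · push Not at h1
        right
        change L = cellD k
        apply Submodule.eq_of_le_of_finrank_eq
        · intro x hx
          rw [cellD, mem_pair_iff]
          exact ⟨x 2, x 3, by simp [h0 x hx, h1 x hx]⟩
        · rw [hL, cellD, finrank_pair_s3 _ _ 2 (by simp) (by simp)]
          intro h
          simpa using congrFun h 3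
  · rintro L (⟨⟨b, c, a⟩, ⟨hb, hc, ha⟩, rfl⟩ | ⟨⟨b, a⟩, ⟨hb, ha⟩, rfl⟩ | ⟨a, ha, rfl⟩ | rfl)
    · change b ^ q + b = 0 at hb
      change c ^ q + c = 0 at hc
      change a ^ (q * q) - a = 0 at ha
      refine ⟨finrank_pair_s3 _ _ 0 (by simp) (by simp) ?_, hyp_pair q hadd _ _ ?_ ?_ ?_ ?_⟩
      · intro h
        simpa using congrFun h 1
      · simp [hypForm, hq0]
        linear_combination hb
      · simp [hypForm, hq0]
      · simp [hypForm, hq0, hneg, ← pow_mul]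
        linear_combination -ha
      · simp [hypForm, hq0]
        linear_combination hc
    · change b ^ q + b = 0 at hb
      change a ^ (q * q) - a = 0 at ha
      refine ⟨finrank_pair_s3 _ _ 0 (by simp) (by simp) ?_, hyp_pair q hadd _ _ ?_ ?_ ?_ ?_⟩
      · intro h
        simpa using congrFun h 2
      · simp [hypForm, hq0]
        linear_combination hb
      · simp [hypForm, hq0]
      · simp [hypForm, hq0, hneg, ← pow_mul]
        linear_combination -ha
      · simp [hypForm, hq0]
    · change a ^ q + a = 0 at ha
      refine ⟨finrank_pair_s3 _ _ 1 (by simp) (by simp) ?_, hyp_pair q hadd _ _ ?_ ?_ ?_ ?_⟩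
      · intro h
        simpa using congrFun h 3
      · simp [hypForm, hq0]
        linear_combination ha
      · simp [hypForm, hq0]
      · simp [hypForm, hq0]
      · simp [hypForm, hq0]
    · refine ⟨finrank_pair_s3 _ _ 2 (by simp) (by simp) ?_, hyp_pair q hadd _ _ ?_ ?_ ?_ ?_⟩
      · intro h
        simpa using congrFun h 3
      all_goals simp [hypForm, hq0]

end Count

section Final

set_option linter.unusedSectionVars false

variable {k : Type*} [Field k] [IsAlgClosed k]

/-- The sesquilinear form attached to a matrix. -/
noncomputable def sesq (τ : k →+* k) (A : Matrix (Fin 4) (Fin 4) k) :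
    (Fin 4 → k) →ₛₗ[τ] (Fin 4 → k) →ₗ[k] k :=
  LinearMap.mk₂'ₛₗ τ (RingHom.id k) (fun x y => ∑ i, ∑ j, A i j * τ (x i) * y j)
    (by intro x x' y; simp [mul_add, add_mul, Finset.sum_add_distrib])
    (by
      intro c x y
      simp only [Pi.smul_apply, smul_eq_mul, map_mul, Finset.mul_sum]
      refine Finset.sum_congr rfl fun i _ => Finset.sum_congr rfl fun j _ => ?_
      ring)
    (by intro x y y'; simp [mul_add, Finset.sum_add_distrib])
    (by
      intro c x y
      simp only [Pi.smul_apply, smul_eq_mul, Finset.mul_sum, RingHom.id_apply]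
      refine Finset.sum_congr rfl fun i _ => Finset.sum_congr rfl fun j _ => ?_
      ring)

lemma sesq_apply (τ : k →+* k) (A : Matrix (Fin 4) (Fin 4) k) (x y : Fin 4 → k) :
    sesq τ A x y = ∑ i, ∑ j, A i j * τ (x i) * y j := rfl

lemma sesq_apply_left (τ : k →+* k) (A : Matrix (Fin 4) (Fin 4) k) (x y : Fin 4 → k) :
    sesq τ A x y = ∑ i, τ (x i) * (A.mulVec y) i := by
  rw [sesq_apply]
  refine Finset.sum_congr rfl fun i _ => ?_
  rw [Matrix.mulVec, dotProduct, Finset.mul_sum]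
  refine Finset.sum_congr rfl fun j _ => ?_
  ring

/-- The semilinear map attached to a matrix. -/
noncomputable def frobMap (σ τ : k →+* k) (A : Matrix (Fin 4) (Fin 4) k) :
    (Fin 4 → k) →ₛₗ[σ] (Fin 4 → k) where
  toFun y := A⁻¹.mulVec ((A.map τ).transpose.mulVec (fun i => σ (y i)))
  map_add' x y := by
    rw [← Matrix.mulVec_add, ← Matrix.mulVec_add]
    congr 2
    ext i
    simp
  map_smul' c x := by
    rw [← Matrix.mulVec_smul, ← Matrix.mulVec_smul]
    congr 2
    ext i
    simp

lemma sesq_frobMap (σ τ : k →+* k) (hστ : ∀ a, σ a = τ (τ a)) (A : Matrix (Fin 4) (Fin 4) k)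
    (hA : IsUnit A) (x y : Fin 4 → k) :
    sesq τ A x (frobMap σ τ A y) = τ (sesq τ A y x) := by
  have hdet : IsUnit A.det := (Matrix.isUnit_iff_isUnit_det A).1 hA
  have h : A.mulVec (frobMap σ τ A y) = (A.map τ).transpose.mulVec (fun i => σ (y i)) := by
    change A.mulVec (A⁻¹.mulVec _) = _
    rw [Matrix.mulVec_mulVec, Matrix.mul_nonsing_inv _ hdet, Matrix.one_mulVec]
  rw [sesq_apply_left, h, sesq_apply]
  simp only [map_sum, map_mul, Matrix.mulVec, dotProduct, Matrix.transpose_apply,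
    Matrix.map_apply, hστ, Finset.mul_sum]
  rw [Finset.sum_comm]
  refine Finset.sum_congr rfl fun i _ => Finset.sum_congr rfl fun j _ => ?_
  ring

lemma sesq_nondeg (τ : k →+* k) (A : Matrix (Fin 4) (Fin 4) k) (hA : IsUnit A) (x : Fin 4 → k)
    (h : ∀ y, sesq τ A x y = 0) : x = 0 := by
  have hdet : IsUnit A.det := (Matrix.isUnit_iff_isUnit_det A).1 hA
  ext i
  have := h (A⁻¹.mulVec (Pi.single i 1))
  rw [sesq_apply_left, Matrix.mulVec_mulVec, Matrix.mul_nonsing_inv _ hdet,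
    Matrix.one_mulVec] at this
  simpa [Pi.single_apply] using this

lemma exists_coords (q : ℕ) (hq : 2 ≤ q) (σ τ : k →+* k) (hτ : ∀ a, τ a = a ^ q)
    (hστ : ∀ a, σ a = τ (τ a)) (A : Matrix (Fin 4) (Fin 4) k) (hA : IsUnit A) :
    ∃ g : (Fin 4 → k) ≃ₗ[k] (Fin 4 → k), ∀ x y, sesq τ A (g x) (g y) = hypForm q x y := by
  obtain ⟨e, f, g, h, hee, hff, hgg, hhh, hef, hfe, hgh, hhg, heg, hge, heh, hhe, hfg, hgf,
    hfh, hhf⟩ := exists_hyperbolic q hq σ τ hτ hστ (frobMap σ τ A) (sesq τ A)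
      (sesq_frobMap σ τ hστ A hA) (sesq_nondeg τ A hA) (by simp)
  let G : (Fin 4 → k) →ₗ[k] (Fin 4 → k) :=
    (LinearMap.proj 0).smulRight e + (LinearMap.proj 1).smulRight g +
      (LinearMap.proj 2).smulRight h + (LinearMap.proj 3).smulRight f
  have hG : ∀ x, G x = x 0 • e + x 1 • g + x 2 • h + x 3 • f := fun x => rfl
  have hform : ∀ x y, sesq τ A (G x) (G y) = hypForm q x y := by
    intro x y
    simp only [hG, map_add, LinearMap.map_smulₛₗ, LinearMap.add_apply, LinearMap.smul_apply,
      smul_eq_mul, RingHom.id_apply, hee, hff, hgg, hhh, hef, hfe, hgh, hhg, heg, hge, heh, hhe,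
      hfg, hgf, hfh, hhf, hτ, hypForm]
    ring
  have hinj : Function.Injective G := by
    rw [injective_iff_map_eq_zero]
    intro x hx
    have h0 : ∀ y, hypForm q x y = 0 := by
      intro y
      rw [← hform, hx, map_zero, LinearMap.zero_apply]
    have hx3 := h0 (Pi.single 0 1)
    have hx2 := h0 (Pi.single 1 1)
    have hx1 := h0 (Pi.single 2 1)
    have hx0 := h0 (Pi.single 3 1)
    have hq0 : q ≠ 0 := by omega
    simp [hypForm, Pi.single_apply, hq0] at hx0 hx1 hx2 hx3
    ext i
    fin_cases i <;> simpa
  exact ⟨LinearEquiv.ofInjectiveEndo G hinj, hform⟩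

lemma isLineOn_iff (q : ℕ) (hq : 2 ≤ q) (τ : k →+* k) (hτ : ∀ a, τ a = a ^ q)
    (A : Matrix (Fin 4) (Fin 4) k) (L : Submodule k (Fin 4 → k)) :
    IsLineOn (extremalCone k q A) L ↔
      finrank k L = 2 ∧ ∀ x ∈ L, ∀ y ∈ L, sesq τ A x y = 0 := by
  have hval : ∀ x, frobForm q A x = sesq τ A x x := by
    intro x
    simp only [frobForm, sesq_apply, hτ]
  refine and_congr Iff.rfl ⟨fun h => ?_, fun h x hx => ?_⟩
  · have h0 : ∀ x ∈ L, sesq τ A x x = 0 := by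
      intro x hx
      rw [← hval]
      exact h hx
    obtain ⟨t, ht⟩ := exists_artin_schreier q hq (1 : k)
    intro x hx y hy
    have h1 := h0 (x + y) (L.add_mem hx hy)
    have h2 := h0 (x + t • y) (L.add_mem hx (L.smul_mem _ hy))
    simp only [map_add, LinearMap.map_smulₛₗ, LinearMap.add_apply, LinearMap.smul_apply,
      smul_eq_mul, RingHom.id_apply, h0 x hx, h0 y hy, hτ] at h1 h2
    linear_combination t ^ q * h1 - h2 - sesq τ A x y * ht
  · change frobForm q A x = 0
    rw [hval]
    exact h x hx x hx

end Final

/-- A smooth extremal surface `X` of degree `q+1` in ℙ³(k)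
contains exactly `(q³+1)(q+1) = q⁴+q³+q+1` lines (equivalently, with
`d = q+1`, exactly `d²(d²-3d+3)` lines). -/
theorem count_lines {k : Type*} [Field k] [IsAlgClosed k]
    (p e q : ℕ) (hp : p.Prime) (hchar : CharP k p) (he : 1 ≤ e) (hq : q = p ^ e)
    (A : Matrix (Fin 4) (Fin 4) k) (hA : IsUnit A) :
    {L : Submodule k (Fin 4 → k) | IsLineOn (extremalCone k q A) L}.ncard
      = (q ^ 3 + 1) * (q + 1) := by

  have : Fact p.Prime := ⟨hp⟩
  have : ExpChar k p := ExpChar.prime hp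
  have hq2 : 2 ≤ q := by
    rw [hq]
    calc 2 ≤ p := hp.two_le
      _ ≤ p ^ e := Nat.le_self_pow (by omega) p
  have hq0 : (q : k) = 0 := by
    rw [hq, Nat.cast_pow, CharP.cast_eq_zero, zero_pow (by omega)]
  let τ : k →+* k := iterateFrobenius k p e
  have hτ : ∀ a, τ a = a ^ q := fun a => by rw [hq]; exact iterateFrobenius_def p e a
  have hadd : ∀ a b : k, (a + b) ^ q = a ^ q + b ^ q := by
    intro a b
    rw [← hτ, map_add, hτ, hτ]
  obtain ⟨g, hg⟩ := exists_coords q hq2 (τ.comp τ) τ hτ (fun _ => rfl) A hA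
  rw [← ncard_cells (k := k) q hq2 hq0, ← lines_eq_cells q hq2 hadd,
    ← Set.ncard_image_of_injective
      {L : Submodule k (Fin 4 → k) | finrank k L = 2 ∧ ∀ x ∈ L, ∀ y ∈ L, hypForm q x y = 0}
      (Submodule.map_injective_of_injective g.injective)]
  congr 1
  ext L
  simp only [Set.mem_ofPred_eq, Set.mem_image, isLineOn_iff q hq2 τ hτ]
  constructor
  · rintro ⟨hL, hiso⟩
    refine ⟨L.comap g.toLinearMap, ⟨?_, ?_⟩, ?_⟩
    · have h := LinearEquiv.finrank_map_eq g.symm L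
      have h2 : L.comap g.toLinearMap = L.map g.symm.toLinearMap :=
        Submodule.comap_equiv_eq_map_symm g L
      rw [← hL, ← h, h2]
    · intro x hx y hy
      rw [← hg]
      exact hiso _ hx _ hy
    · exact Submodule.map_comap_eq_of_surjective g.surjective L
  · rintro ⟨M, ⟨hM, hiso⟩, rfl⟩
    refine ⟨?_, ?_⟩
    · rw [← hM]
      exact LinearEquiv.finrank_map_eq g M
    · rintro _ ⟨x, hx, rfl⟩ _ ⟨y, hy, rfl⟩
      exact (hg x y).trans (hiso x hx y hy)
end
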